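/- arXiv:1501.06518 — 3 statements merged into one kernel-verified Lean document; each statement's English description precedes it below -/
import Mathlib

section
/- Let G be a finite simple graph that is 2-connected (G has at least three vertices, G is connected, and deleting any single vertex leaves G connected) and has tree-depth d. Then every depth-decomposition of the cycle matroid M(G) has depth h satisfying 4^h ≥ d; in particular, the branch-depth of M(G) is at least (1/2)·log₂ d. -/
/-!
Common definitions: rooted trees (encoded by a parent function), their depth,
depth-decompositions of matroids, matroid rank, circuits, contraction,
connectivity and components.
-/

/-- `u` is an ancestor of `v` (or equal to it) in the rooted tree encoded by `parent`. -/
def Anc {V : Type} (parent : V → V) (u v : V) : Prop := ∃ n : ℕ, parent^[n] v = u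

/-- `(root, parent)` encodes a rooted tree: the root is its own parent and every
vertex reaches the root by iterating `parent` (each non-root vertex is joined to its
parent by an edge). -/
def IsRootedTree {V : Type} (root : V) (parent : V → V) : Prop :=
  parent root = root ∧ ∀ v : V, ∃ n : ℕ, parent^[n] v = root

/-- The depth of a vertex in a rooted tree: the number of edges on the path from the
root to the vertex. -/
noncomputable def vdepth {V : Type} (root : V) (parent : V → V) (v : V) : ℕ :=
  sInf {n : ℕ | parent^[n] v = root}

/-- The depth of a rooted tree: the maximum number of edges on a path from the root
to a leaf, i.e. the maximal depth of a vertex. -/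
noncomputable def treeDepth {V : Type} (root : V) (parent : V → V) : ℕ :=
  sSup (Set.range (vdepth root parent))

/-- A leaf of a rooted tree: a vertex that is the parent of no other vertex. -/
def IsLeaf {V : Type} (parent : V → V) (v : V) : Prop := ∀ u : V, u ≠ v → parent u ≠ v

/-- The rank of a set `X` in a matroid `M`: the largest size of an independent subset
of `X`. -/
noncomputable def mrank {α : Type} (M : Matroid α) (X : Set α) : ℕ :=
  sSup {n : ℕ | ∃ I : Set α, I ⊆ X ∧ M.Indep I ∧ I.ncard = n}

/-- `(root, parent, f)` is a depth-decomposition of the matroid `M`: the tree is finite,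
the rank of `M` equals the number of edges of the tree (one edge per non-root vertex),
and the rank of any `X ⊆ M.E` is at most the number of edges of the union `T*(X)` of
the paths from the root to the vertices of `f(X)` (one edge per non-root vertex that is
an ancestor of, or equal to, some vertex of `f(X)`). -/
def IsDepthDecomp {α V : Type} (M : Matroid α) (root : V) (parent : V → V)
    (f : α → V) : Prop :=
  Finite V ∧ IsRootedTree root parent ∧
  mrank M M.E = Set.ncard {v : V | v ≠ root} ∧
  ∀ X : Set α, X ⊆ M.E →
    mrank M X ≤ Set.ncard {v : V | v ≠ root ∧ ∃ e ∈ X, Anc parent v (f e)}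

/-- `M` has a depth-decomposition of depth at most `d`. -/
def HasDepthDecompOfDepthLE {α : Type} (M : Matroid α) (d : ℕ) : Prop :=
  ∃ (V : Type) (root : V) (parent : V → V) (f : α → V),
    IsDepthDecomp M root parent f ∧ treeDepth root parent ≤ d

/-- The branch-depth of a matroid: the smallest depth of a depth-decomposition. -/
noncomputable def branchDepth {α : Type} (M : Matroid α) : ℕ :=
  sInf {d : ℕ | HasDepthDecompOfDepthLE M d}

/-- A circuit of a matroid: a minimal dependent set. -/
def IsCircuitOf {α : Type} (M : Matroid α) (C : Set α) : Prop :=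
  M.Dep C ∧ ∀ D : Set α, M.Dep D → D ⊆ C → D = C

/-- `N` is the contraction `M / F` of the matroid `M` by the set `F`: the ground set of
`N` is `M.E \ F`, and a set `I` disjoint from `F` is independent in `N` if and only if
`r(F ∪ I) = r(F) + |I|`. -/
def IsContractionBy {α : Type} (M : Matroid α) (F : Set α) (N : Matroid α) : Prop :=
  N.E = M.E \ F ∧
  ∀ I : Set α, N.Indep I ↔
    I ⊆ M.E \ F ∧ I.Finite ∧ mrank M (F ∪ I) = mrank M F + I.ncard

/-- A matroid is connected if its ground set is nonempty and any two distinct elements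
lie in a common circuit. -/
def IsConnectedM {α : Type} (M : Matroid α) : Prop :=
  M.E.Nonempty ∧
  ∀ x ∈ M.E, ∀ y ∈ M.E, x = y ∨ ∃ C : Set α, IsCircuitOf M C ∧ x ∈ C ∧ y ∈ C

/-- A component of a matroid: an equivalence class of the relation "equal or lying in a
common circuit" on the ground set. -/
def IsComponentOf {α : Type} (M : Matroid α) (K : Set α) : Prop :=
  ∃ x ∈ M.E,
    K = {y ∈ M.E | x = y ∨ ∃ C : Set α, IsCircuitOf M C ∧ x ∈ C ∧ y ∈ C}

/-- `(root, parent)` is a tree-depth decomposition of the graph `G`: a rooted tree on the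
vertex set of `G` such that every edge of `G` joins two vertices one of which is an
ancestor of the other. -/
def IsTreeDepthDecompOf {W : Type} (G : SimpleGraph W) (root : W) (parent : W → W) :
    Prop :=
  IsRootedTree root parent ∧
  ∀ u v : W, G.Adj u v → Anc parent u v ∨ Anc parent v u

/-- The tree-depth of a graph: the smallest depth of a rooted tree on its vertex set in
which the two endpoints of every edge are ancestor-related. -/
noncomputable def graphTreeDepth {W : Type} (G : SimpleGraph W) : ℕ :=
  sInf {t : ℕ | ∃ (root : W) (parent : W → W),
    IsTreeDepthDecompOf G root parent ∧ treeDepth root parent = t}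

/-- `M` is the cycle matroid of the graph `G`: its ground set is the edge set of `G` and
its independent sets are exactly the acyclic sets of edges of `G`. -/
def IsCycleMatroidOf {W : Type} (M : Matroid (Sym2 W)) (G : SimpleGraph W) : Prop :=
  M.E = G.edgeSet ∧
  ∀ I : Set (Sym2 W), M.Indep I ↔ I ⊆ G.edgeSet ∧ (SimpleGraph.fromEdgeSet I).IsAcyclic

/-! ### Rooted trees -/

theorem anc_refl {V : Type} (parent : V → V) (u : V) : Anc parent u u := ⟨0, rfl⟩

theorem anc_trans {V : Type} {parent : V → V} {u v w : V} (h1 : Anc parent u v)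
    (h2 : Anc parent v w) : Anc parent u w := by
  obtain ⟨n, hn⟩ := h1
  obtain ⟨m, hm⟩ := h2
  exact ⟨n + m, by rw [Function.iterate_add_apply, hm, hn]⟩

theorem anc_parent {V : Type} (parent : V → V) (v : V) : Anc parent (parent v) v := ⟨1, rfl⟩

theorem anc_of_ne {V : Type} {parent : V → V} {u v : V} (h : Anc parent u v) (hne : u ≠ v) :
    Anc parent u (parent v) := by
  obtain ⟨n, hn⟩ := h
  cases n with
  | zero => exact absurd hn.symm hne
  | succ n => exact ⟨n, by rwa [Function.iterate_succ_apply] at hn⟩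

theorem anc_comparable {V : Type} {parent : V → V} {u v w : V} (h1 : Anc parent u w)
    (h2 : Anc parent v w) : Anc parent u v ∨ Anc parent v u := by
  obtain ⟨n, hn⟩ := h1
  obtain ⟨m, hm⟩ := h2
  rcases le_total n m with h | h
  · right
    exact ⟨m - n, by rw [← hn, ← Function.iterate_add_apply, Nat.sub_add_cancel h, hm]⟩
  · left
    exact ⟨n - m, by rw [← hm, ← Function.iterate_add_apply, Nat.sub_add_cancel h, hn]⟩

/-- the child of `u` on the way to `v` -/
theorem exists_child {V : Type} {parent : V → V} {u v : V} (h : Anc parent u v) (hne : v ≠ u) :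
    ∃ c, parent c = u ∧ c ≠ u ∧ Anc parent c v := by
  obtain ⟨n, hn⟩ := h
  induction n generalizing v with
  | zero => exact absurd hn hne
  | succ n ih =>
    rw [Function.iterate_succ_apply] at hn
    by_cases hp : parent v = u
    · exact ⟨v, hp, hne, anc_refl _ _⟩
    · obtain ⟨c, h1, h2, h3⟩ := ih hp hn
      exact ⟨c, h1, h2, anc_trans h3 (anc_parent _ _)⟩

/-- `δ` is a depth function for the rooted tree. -/
def IsDepthFun {V : Type} (root : V) (parent : V → V) (δ : V → ℕ) : Prop :=
  parent root = root ∧ δ root = 0 ∧ ∀ v, v ≠ root → δ v = δ (parent v) + 1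

theorem isDepthFun_vdepth {V : Type} {root : V} {parent : V → V} (h : IsRootedTree root parent) :
    IsDepthFun root parent (vdepth root parent) := by
  refine ⟨h.1, ?_, ?_⟩
  · have : (0 : ℕ) ∈ {n : ℕ | parent^[n] root = root} := rfl
    exact Nat.le_zero.1 (Nat.sInf_le this)
  · intro v hv
    have h1 : parent^[vdepth root parent v] v = root := Nat.sInf_mem (s := {n | parent^[n] v = root}) (h.2 v)
    have h2 : parent^[vdepth root parent (parent v)] (parent v) = root :=
      Nat.sInf_mem (s := {n | parent^[n] (parent v) = root}) (h.2 (parent v))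
    apply le_antisymm
    · exact Nat.sInf_le (by simpa [Function.iterate_succ_apply] using h2)
    · cases hk : vdepth root parent v with
      | zero => rw [hk] at h1; exact absurd h1 hv
      | succ k =>
        rw [hk, Function.iterate_succ_apply] at h1
        exact Nat.succ_le_succ (Nat.sInf_le h1)

theorem IsDepthFun.isRootedTree {V : Type} {root : V} {parent : V → V} {δ : V → ℕ}
    (h : IsDepthFun root parent δ) : IsRootedTree root parent := by
  refine ⟨h.1, ?_⟩
  have : ∀ n v, δ v = n → ∃ n : ℕ, parent^[n] v = root := by
    intro n
    induction n with
    | zero =>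
      intro v hv
      by_cases hr : v = root
      · exact ⟨0, hr⟩
      · have := h.2.2 v hr; omega
    | succ n ih =>
      intro v hv
      by_cases hr : v = root
      · exact ⟨0, hr⟩
      · have := h.2.2 v hr
        obtain ⟨m, hm⟩ := ih (parent v) (by omega)
        exact ⟨m + 1, hm⟩
  exact fun v => this _ v rfl

theorem IsDepthFun.unique {V : Type} {root : V} {parent : V → V} {δ δ' : V → ℕ}
    (h : IsDepthFun root parent δ) (h' : IsDepthFun root parent δ') (v : V) : δ v = δ' v := by
  obtain ⟨n, hn⟩ := h.isRootedTree.2 v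
  induction n generalizing v with
  | zero =>
    have : v = root := hn
    rw [this, h.2.1, h'.2.1]
  | succ n ih =>
    by_cases hr : v = root
    · rw [hr, h.2.1, h'.2.1]
    · rw [h.2.2 v hr, h'.2.2 v hr, ih (parent v) hn]

theorem IsDepthFun.anc_root {V : Type} {root : V} {parent : V → V} {δ : V → ℕ}
    (h : IsDepthFun root parent δ) (v : V) : Anc parent root v := h.isRootedTree.2 v

theorem IsDepthFun.lt_of_anc {V : Type} {root : V} {parent : V → V} {δ : V → ℕ}
    (h : IsDepthFun root parent δ) {u v : V} (ha : Anc parent u v) (hne : u ≠ v) : δ u < δ v := by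
  obtain ⟨n, hn⟩ := ha
  induction n generalizing v with
  | zero => exact absurd hn.symm hne
  | succ n ih =>
    rw [Function.iterate_succ_apply] at hn
    have hv : v ≠ root := by
      rintro rfl
      have : ∀ m, parent^[m] v = v := fun m => Function.iterate_fixed h.1 m
      rw [h.1, this] at hn
      exact hne hn.symm
    have := h.2.2 v hv
    by_cases hp : u = parent v
    · subst hp; omega
    · have := ih hp hn; omega

theorem IsDepthFun.anc_antisymm {V : Type} {root : V} {parent : V → V} {δ : V → ℕ}
    (h : IsDepthFun root parent δ) {u v : V} (ha : Anc parent u v) (hb : Anc parent v u) :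
    u = v := by
  by_contra hne
  have := h.lt_of_anc ha hne
  have := h.lt_of_anc hb (Ne.symm hne)
  omega

theorem vdepth_le_treeDepth {V : Type} [Finite V] (root : V) (parent : V → V) (v : V) :
    vdepth root parent v ≤ treeDepth root parent :=
  le_csSup (Set.finite_range _).bddAbove ⟨v, rfl⟩

/-! ### The size of minimal zero-sum sets -/

/-- the sum over `C` vanishes on the proper descendants of `u` -/
def ZeroBelow {α V : Type} (parent : V → V) (a : α → V → ZMod 2) (u : V) (C : Finset α) : Prop :=
  ∀ w, Anc parent u w → w ≠ u → ∑ e ∈ C, a e w = 0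

theorem card_le_of_minimal {α V : Type} {root : V} {parent : V → V} {δ : V → ℕ}
    (h : IsDepthFun root parent δ) (f : α → V) (a : α → V → ZMod 2)
    (ha : ∀ e w, a e w ≠ 0 → Anc parent w (f e)) (n : ℕ) :
    ∀ u, (∀ w, Anc parent u w → δ w ≤ δ u + n) → ∀ C : Finset α, C.Nonempty →
      (∀ e ∈ C, Anc parent u (f e)) → ZeroBelow parent a u C →
      (∀ D ⊆ C, D.Nonempty → ZeroBelow parent a u D → D = C) → C.card ≤ 2 ^ n := by
  classical
  have hN : ∀ m : ℕ, 1 ≤ 2 ^ m := fun m => Nat.one_le_two_pow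
  induction n with
  | zero =>
    intro u hu C hC hf _ hmin
    obtain ⟨e, he⟩ := hC
    have : ({e} : Finset α) = C := by
      refine hmin _ (by simpa using he) (by simp) ?_
      intro w hw hne
      have := hu w hw
      have := h.lt_of_anc hw (Ne.symm hne)
      omega
    rw [← this]; simp
  | succ n ih =>
    intro u hu C hC hf hz hmin
    by_cases hall : ∀ e ∈ C, f e = u
    · obtain ⟨e, he⟩ := hC
      have : ({e} : Finset α) = C := by
        refine hmin _ (by simpa using he) (by simp) ?_
        intro w hw hne
        rw [Finset.sum_singleton]
        by_contra hc
        have h1 := ha e w hc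
        rw [hall e he] at h1
        exact hne (h.anc_antisymm h1 hw)
      rw [← this]
      simpa using hN (n + 1)
    · push Not at hall
      obtain ⟨e0, he0, hfe0⟩ := hall
      obtain ⟨c, hcu, hcne, hc0⟩ := exists_child (hf e0 he0) hfe0
      have huc : Anc parent u c := by rw [← hcu]; exact anc_parent _ _
      -- coordinates outside the branch
      have hout : ∀ e w, Anc parent c (f e) → Anc parent u w → w ≠ u → ¬ Anc parent c w →
          a e w = 0 := by
        intro e w hce huw hwu hcw
        by_contra hne
        rcases anc_comparable (ha e w hne) hce with h1 | h1
        · by_cases hwc : w = c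
          · exact hcw (hwc ▸ anc_refl _ _)
          · have := anc_of_ne h1 hwc
            rw [hcu] at this
            exact hwu (h.anc_antisymm this huw)
        · exact hcw h1
      have hD : C.filter (fun e => Anc parent c (f e)) = C := by
        refine hmin _ (Finset.filter_subset _ _) ⟨e0, by simp [he0, hc0]⟩ ?_
        intro w hw hne
        by_cases hcw : Anc parent c w
        · rw [← hz w hw hne]
          apply Finset.sum_subset (Finset.filter_subset _ _)
          intro e he he'
          by_contra hne'
          exact he' (by simp [he, anc_trans hcw (ha e w hne')])
        · apply Finset.sum_eq_zero
          intro e he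
          exact hout e w (Finset.mem_filter.1 he).2 hw hne hcw
      have hfc : ∀ e ∈ C, Anc parent c (f e) := by
        intro e he
        rw [← hD] at he
        exact (Finset.mem_filter.1 he).2
      have hcroot : c ≠ root := by
        rintro rfl
        exact hcne (by rw [← hcu, h.1])
      have hδc : δ c = δ u + 1 := by rw [h.2.2 c hcroot, hcu]
      have hIH : ∀ D ⊆ C, D.Nonempty → ZeroBelow parent a c D →
          (∀ D' ⊆ D, D'.Nonempty → ZeroBelow parent a c D' → D' = D) → D.card ≤ 2 ^ n := by
        intro D hDC hDne hDz hDm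
        refine ih c ?_ D hDne (fun e he => hfc e (hDC he)) hDz hDm
        intro w hw
        have := hu w (anc_trans huc hw)
        omega
      have hup : ∀ X ⊆ C, ZeroBelow parent a c X → ∑ e ∈ X, a e c = 0 → ZeroBelow parent a u X := by
        intro X hX hXz hXc w hw hne
        by_cases hcw : Anc parent c w
        · by_cases hwc : w = c
          · rw [hwc]; exact hXc
          · exact hXz w hcw hwc
        · exact Finset.sum_eq_zero fun e he => hout e w (hfc e (hX he)) hw hne hcw
      have hzc : ZeroBelow parent a c C := by
        intro w hw hne
        refine hz w (anc_trans huc hw) ?_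
        rintro rfl
        exact hcne (h.anc_antisymm hw huc)
      -- choose a minimal zero-sum subset
      obtain ⟨D, hDmem, hDmin⟩ := Finset.exists_min_image
        (C.powerset.filter (fun D => D.Nonempty ∧ ZeroBelow parent a c D)) Finset.card
        ⟨C, by simp [hC, hzc]⟩
      simp only [Finset.mem_filter, Finset.mem_powerset] at hDmem hDmin
      obtain ⟨hDC, hDne, hDz⟩ := hDmem
      have hDcard : D.card ≤ 2 ^ n := by
        refine hIH D hDC hDne hDz ?_
        intro D' hD' hne' hz'
        exact Finset.eq_of_subset_of_card_le hD' (hDmin D' ⟨hD'.trans hDC, hne', hz'⟩)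
      by_cases hDeq : D = C
      · rw [← hDeq, pow_succ]; omega
      have hone : ∀ X ⊆ C, X.Nonempty → X ≠ C → ZeroBelow parent a c X →
          ∑ e ∈ X, a e c = 1 := by
        intro X hX hXne hXC hXz
        by_contra hne
        have h0 : ∑ e ∈ X, a e c = 0 := by
          generalize ∑ e ∈ X, a e c = y at hne ⊢
          revert y; decide
        exact hXC (hmin X hX hXne (hup X hX hXz h0))
      have hsd : (C \ D).card ≤ 2 ^ n := by
        refine hIH (C \ D) Finset.sdiff_subset ?_ ?_ ?_
        · rw [Finset.sdiff_nonempty]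
          exact fun hh => hDeq (Finset.Subset.antisymm hDC hh)
        · intro w hw hne
          have h1 := Finset.sum_sdiff (f := fun e => a e w) hDC
          rw [hDz w hw hne, hzc w hw hne, add_zero] at h1
          exact h1
        · intro D' hD' hne' hz'
          have hdisj : Disjoint D D' :=
            Finset.disjoint_left.2 fun e he he' => (Finset.mem_sdiff.1 (hD' he')).2 he
          have hD'C : D' ⊆ C := hD'.trans Finset.sdiff_subset
          have hD'ne : D' ≠ C := by
            rintro rfl
            obtain ⟨x, hx⟩ := hDne
            exact Finset.disjoint_left.1 hdisj hx (hDC hx)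
          have hU : D ∪ D' = C := by
            refine hmin _ (Finset.union_subset hDC hD'C) (hDne.mono Finset.subset_union_left) ?_
            refine hup _ (Finset.union_subset hDC hD'C) ?_ ?_
            · intro w hw hne
              rw [Finset.sum_union hdisj, hDz w hw hne, hz' w hw hne, add_zero]
            · rw [Finset.sum_union hdisj, hone D hDC hDne hDeq hDz, hone D' hD'C hne' hD'ne hz']
              decide
          rw [← hU, Finset.union_sdiff_cancel_left hdisj]
      have := Finset.card_sdiff_add_card_eq_card hDC
      rw [pow_succ]; omega

/-! ### Coordinates adapted to the decomposition tree -/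

theorem ncard_le_mrank {α : Type} [Finite α] {M : Matroid α} {X I : Set α} (hI : I ⊆ X)
    (hM : M.Indep I) : I.ncard ≤ mrank M X := by
  refine le_csSup ⟨Nat.card α, ?_⟩ ⟨I, hI, hM, rfl⟩
  rintro n ⟨J, -, -, rfl⟩
  exact Set.ncard_le_card J

/-- functions on the vertices which are constant along the edges in `X` -/
def constAlong {W : Type} (X : Set (Sym2 W)) : Submodule (ZMod 2) (W → ZMod 2) where
  carrier := {x | ∀ u v, s(u, v) ∈ X → x u = x v}
  add_mem' := by
    intro x y hx hy u v h
    simp [hx u v h, hy u v h]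
  zero_mem' := by
    intro u v h
    rfl
  smul_mem' := by
    intro c x hx u v h
    simp [hx u v h]

theorem card_le_finrank_constAlong {W : Type} [Fintype W] {G : SimpleGraph W}
    {M : Matroid (Sym2 W)} (hM : IsCycleMatroidOf M G) (X : Set (Sym2 W)) (hX : X ⊆ G.edgeSet) :
    Fintype.card W ≤ Module.finrank (ZMod 2) (constAlong X) + mrank M X := by
  classical
  obtain ⟨F, hF, hac, hreach⟩ :=
    (SimpleGraph.exists_isAcyclic_reachable_eq_le (G := SimpleGraph.fromEdgeSet X))
  have hFX : F.edgeSet ⊆ X := by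
    intro e he
    have := SimpleGraph.edgeSet_mono hF he
    rw [SimpleGraph.edgeSet_fromEdgeSet] at this
    exact this.1
  have hind : M.Indep F.edgeSet := by
    rw [hM.2]
    exact ⟨hFX.trans hX, by rwa [SimpleGraph.fromEdgeSet_edgeSet]⟩
  have h1 := ncard_le_mrank hFX hind
  let g : (W → ZMod 2) →ₗ[ZMod 2] (F.edgeSet → ZMod 2) :=
    LinearMap.pi fun e =>
      (LinearMap.proj (Quot.out e.1).1 : (W → ZMod 2) →ₗ[ZMod 2] ZMod 2) -
        (LinearMap.proj (Quot.out e.1).2 : (W → ZMod 2) →ₗ[ZMod 2] ZMod 2)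
  have hker : LinearMap.ker g ≤ constAlong X := by
    intro x hx u v huv
    have hadj : ∀ a b, F.Adj a b → x a = x b := by
      intro a b hab
      have h2 := congrFun (LinearMap.mem_ker.1 hx) ⟨s(a, b), hab⟩
      simp only [g, LinearMap.pi_apply, LinearMap.sub_apply, LinearMap.proj_apply,
        Pi.zero_apply, sub_eq_zero] at h2
      have h3 : s((Quot.out s(a, b)).1, (Quot.out s(a, b)).2) = s(a, b) := Quot.out_eq _
      rcases Sym2.eq_iff.1 h3 with ⟨h4, h5⟩ | ⟨h4, h5⟩
      · rw [h4, h5] at h2; exact h2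
      · rw [h4, h5] at h2; exact h2.symm
    have hw : ∀ a b, F.Walk a b → x a = x b := by
      intro a b p
      induction p with
      | nil => rfl
      | cons h _ ih => exact (hadj _ _ h).trans ih
    have hr : F.Reachable u v := by
      rw [hreach]
      by_cases hne : u = v
      · rw [hne]
      · exact SimpleGraph.Adj.reachable (by simp [huv, hne])
    exact hr.elim fun p => hw u v p
  have h2 := LinearMap.finrank_range_add_finrank_ker g
  have h3 := Submodule.finrank_mono hker
  have h4 : Module.finrank (ZMod 2) (LinearMap.range g) ≤ F.edgeSet.ncard := by
    refine (Submodule.finrank_le _).trans ?_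
    rw [Module.finrank_fintype_fun_eq_card, Set.ncard_eq_toFinset_card', Set.toFinset_card]
  rw [Module.finrank_fintype_fun_eq_card] at h2
  omega

theorem mrank_add_one_le {W : Type} [Fintype W] [Nonempty W] {G : SimpleGraph W}
    {M : Matroid (Sym2 W)} (hM : IsCycleMatroidOf M G) (X : Set (Sym2 W)) :
    mrank M X + 1 ≤ Fintype.card W := by
  classical
  have hpos : 1 ≤ Fintype.card W := Fintype.card_pos
  have : mrank M X ≤ Fintype.card W - 1 := by
    refine csSup_le ⟨0, ∅, by simp, M.empty_indep, by simp⟩ ?_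
    rintro n ⟨I, -, hI, rfl⟩
    obtain ⟨hIG, hac⟩ := (hM.2 I).1 hI
    obtain ⟨T, hT1, hT2, hT3⟩ := SimpleGraph.Connected.exists_isTree_le_of_le_of_isAcyclic
      (G := (⊤ : SimpleGraph W)) SimpleGraph.connected_top le_top hac
    have h1 := hT3.card_edgeFinset
    have h2 : I ⊆ T.edgeSet := by
      intro e he
      apply SimpleGraph.edgeSet_mono hT1
      rw [SimpleGraph.edgeSet_fromEdgeSet]
      exact ⟨he, G.not_isDiag_of_mem_edgeSet (hIG he)⟩
    have h3 := Set.ncard_le_ncard h2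
    rw [← SimpleGraph.coe_edgeFinset, Set.ncard_coe_finset] at h3
    omega
  omega

theorem finrank_constAlong_ge {W : Type} [Fintype W] {G : SimpleGraph W} (hconn : G.Connected)
    {M : Matroid (Sym2 W)} (hM : IsCycleMatroidOf M G)
    {V : Type} [Fintype V] {root : V} {parent : V → V} {f : Sym2 W → V}
    (hdec : IsDepthDecomp M root parent f) (w : V) (hw : w ≠ root) :
    {v | Anc parent w v}.ncard + 1 ≤
      Module.finrank (ZMod 2) (constAlong {e ∈ G.edgeSet | ¬ Anc parent w (f e)}) := by
  classical
  have := hconn.nonempty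
  have hδ := isDepthFun_vdepth hdec.2.1
  have h1 := card_le_finrank_constAlong hM {e ∈ G.edgeSet | ¬ Anc parent w (f e)}
    (fun e he => he.1)
  have h2 := mrank_add_one_le hM M.E
  have h3 := hdec.2.2.2 {e ∈ G.edgeSet | ¬ Anc parent w (f e)} (by rw [hM.1]; exact fun e he => he.1)
  rw [hdec.2.2.1] at h2
  have h4 : Set.ncard {v : V | v ≠ root ∧ ∃ e ∈ {e ∈ G.edgeSet | ¬ Anc parent w (f e)},
      Anc parent v (f e)} ≤ Set.ncard ({v : V | v ≠ root} \ {v | Anc parent w v}) := by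
    refine Set.ncard_le_ncard ?_ (Set.toFinite _)
    rintro v ⟨hv, e, he, hve⟩
    exact ⟨hv, fun hwv => he.2 (anc_trans hwv hve)⟩
  have hsub : {v | Anc parent w v} ⊆ {v : V | v ≠ root} := by
    rintro v hv rfl
    exact hw (hδ.anc_antisymm hv (hδ.anc_root w))
  have h5 := Set.ncard_sdiff_add_ncard_of_subset hsub
  omega

theorem constAlong_edgeSet {W : Type} {G : SimpleGraph W} (hconn : G.Connected)
    {x : W → ZMod 2} (hx : ∀ u v, G.Adj u v → x u = x v) :
    x ∈ Submodule.span (ZMod 2) {(1 : W → ZMod 2)} := by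
  have hw : ∀ a b, G.Walk a b → x a = x b := by
    intro a b p
    induction p with
    | nil => rfl
    | cons h _ ih => exact (hx _ _ h).trans ih
  obtain ⟨r⟩ := hconn.nonempty
  rw [Submodule.mem_span_singleton]
  refine ⟨x r, ?_⟩
  ext v
  simp only [Pi.smul_apply, Pi.one_apply, smul_eq_mul, mul_one]
  exact (hconn.preconnected r v).elim fun p => hw r v p

theorem exists_coords_aux {W : Type} [Fintype W] {G : SimpleGraph W} (hconn : G.Connected)
    {M : Matroid (Sym2 W)} (hM : IsCycleMatroidOf M G)
    {V : Type} [Fintype V] {root : V} {parent : V → V} {f : Sym2 W → V}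
    (hdec : IsDepthDecomp M root parent f) (n : ℕ) :
    ∀ D : Finset V, D.card = n → root ∉ D → (∀ x ∈ D, ∀ y, Anc parent x y → y ∈ D) →
      ∃ φ : V → W → ZMod 2,
        (∀ w ∈ D, φ w ∈ constAlong {e ∈ G.edgeSet | ¬ Anc parent w (f e)}) ∧
        D.card + 1 ≤ Module.finrank (ZMod 2)
          (Submodule.span (ZMod 2) (insert 1 (φ '' (D : Set V)))) := by
  classical
  have := hconn.nonempty
  have hδ := isDepthFun_vdepth hdec.2.1
  induction n with
  | zero =>
    intro D hD _ _
    rw [Finset.card_eq_zero] at hD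
    subst hD
    refine ⟨fun _ => 0, by simp, ?_⟩
    have h1 : Submodule.span (ZMod 2) {(1 : W → ZMod 2)} ≤ Submodule.span (ZMod 2)
        (insert 1 ((fun _ => 0 : V → W → ZMod 2) '' ((∅ : Finset V) : Set V))) :=
      Submodule.span_mono (by simp)
    have h2 := Submodule.finrank_mono h1
    rw [finrank_span_singleton one_ne_zero] at h2
    simpa using h2
  | succ n ih =>
    intro D hD hroot hcl
    obtain ⟨w, hwD, hwmin⟩ := Finset.exists_min_image D (vdepth root parent)
      (Finset.card_pos.1 (by omega))
    have hwroot : w ≠ root := by rintro rfl; exact hroot hwD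
    obtain ⟨φ, hφ1, hφ2⟩ := ih (D.erase w) (by rw [Finset.card_erase_of_mem hwD]; omega)
      (fun hh => hroot (Finset.mem_of_mem_erase hh)) (by
        intro x hx y hxy
        obtain ⟨hxw, hxD⟩ := Finset.mem_erase.1 hx
        refine Finset.mem_erase.2 ⟨?_, hcl x hxD y hxy⟩
        rintro rfl
        have := hδ.lt_of_anc hxy hxw
        have := hwmin x hxD
        omega)
    -- the proper descendants of w
    let B : Finset V := (Finset.univ.filter fun v => Anc parent w v).erase w
    have hBD : B ⊆ D.erase w := by
      intro v hv
      simp only [B, Finset.mem_erase, Finset.mem_filter, Finset.mem_univ, true_and] at hv ⊢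
      exact ⟨hv.1, hcl w hwD v hv.2⟩
    have hBcard : B.card + 1 = {v | Anc parent w v}.ncard := by
      have : w ∈ (Finset.univ.filter fun v => Anc parent w v) := by simp [anc_refl]
      rw [Finset.card_erase_add_one this, ← Set.ncard_coe_finset]
      congr 1; ext v; simp
    let P : Submodule (ZMod 2) (W → ZMod 2) :=
      Submodule.span (ZMod 2) (insert 1 (φ '' (B : Set V)))
    have hPrank : Module.finrank (ZMod 2) P ≤ B.card + 1 := by
      have h1 : P = Submodule.span (ZMod 2)
          ((insert 1 (B.image φ) : Finset (W → ZMod 2)) : Set (W → ZMod 2)) := by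
        simp [P]
      rw [h1]
      refine (finrank_span_finset_le_card _).trans ?_
      refine (Finset.card_insert_le _ _).trans ?_
      exact Nat.succ_le_succ Finset.card_image_le
    have hge := finrank_constAlong_ge hconn hM hdec w hwroot
    obtain ⟨y, hyΦ, hyP⟩ : ∃ y ∈ constAlong {e ∈ G.edgeSet | ¬ Anc parent w (f e)}, y ∉ P := by
      by_contra hcon
      push Not at hcon
      have := Submodule.finrank_mono (show constAlong {e ∈ G.edgeSet | ¬ Anc parent w (f e)} ≤ P from hcon)
      omega
    have hPΦ : P ≤ constAlong {e ∈ G.edgeSet | ¬ Anc parent w (f e)} := by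
      refine Submodule.span_le.2 ?_
      rintro z (rfl | ⟨v, hv, rfl⟩)
      · intro u v _; rfl
      · intro a b hab
        refine hφ1 v (hBD hv) a b ⟨hab.1, fun h2 => hab.2 (anc_trans ?_ h2)⟩
        have hv' : v ∈ B := hv
        simp only [B, Finset.mem_erase, Finset.mem_filter, Finset.mem_univ, true_and] at hv'
        exact hv'.2
    let Q : Submodule (ZMod 2) (W → ZMod 2) :=
      Submodule.span (ZMod 2) (insert 1 (φ '' ((D.erase w : Finset V) : Set V)))
    let R : Submodule (ZMod 2) (W → ZMod 2) :=
      Submodule.span (ZMod 2) (φ '' ((D.erase w \ B : Finset V) : Set V))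
    have hQ : Q = P ⊔ R := by
      simp only [Q, P, R]
      rw [← Submodule.span_union]
      congr 1
      rw [Set.insert_union, ← Set.image_union, ← Finset.coe_union, Finset.union_sdiff_of_subset hBD]
    have hRc : ∀ z ∈ R, ∀ a b, G.Adj a b → Anc parent w (f s(a, b)) → z a = z b := by
      intro z hz a b hab hwab
      have : R ≤ constAlong {s(a, b)} := by
        refine Submodule.span_le.2 ?_
        rintro z ⟨v, hv, rfl⟩
        intro a' b' hab'
        have hab'' : s(a', b') = s(a, b) := hab'
        have hv' : v ∈ D.erase w \ B := hv
        obtain ⟨hv1, hv2⟩ := Finset.mem_sdiff.1 hv'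
        refine hφ1 v hv1 a' b' ⟨by rw [hab'']; exact hab, ?_⟩
        rw [hab'']
        intro hvab
        have hvw : v ≠ w := (Finset.mem_erase.1 hv1).1
        rcases anc_comparable hvab hwab with h1 | h1
        · have := hδ.lt_of_anc h1 hvw
          have := hwmin v (Finset.mem_erase.1 hv1).2
          omega
        · exact hv2 (by simp [B, hvw, h1])
      exact this hz a b rfl
    have hyQ : y ∉ Q := by
      rw [hQ]
      intro hy
      obtain ⟨p, hp, r, hr, hpr⟩ := Submodule.mem_sup.1 hy
      have hrP : r ∈ P := by
        have hrΦ : r ∈ constAlong {e ∈ G.edgeSet | ¬ Anc parent w (f e)} := by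
          have : r = y - p := by rw [← hpr]; abel
          rw [this]
          exact Submodule.sub_mem _ hyΦ (hPΦ hp)
        have hr1 : r ∈ Submodule.span (ZMod 2) {(1 : W → ZMod 2)} := by
          apply constAlong_edgeSet hconn
          intro a b hab
          by_cases hh : Anc parent w (f s(a, b))
          · exact hRc r hr a b hab hh
          · exact hrΦ a b ⟨hab, hh⟩
        exact Submodule.span_mono (by simp) hr1
      exact hyP (hpr ▸ Submodule.add_mem _ hp hrP)
    refine ⟨Function.update φ w y, ?_, ?_⟩
    · intro v hv
      by_cases hvw : v = w
      · subst hvw; simpa using hyΦ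
      · rw [Function.update_of_ne hvw]
        exact hφ1 v (Finset.mem_erase.2 ⟨hvw, hv⟩)
    · have hlt : Q < Submodule.span (ZMod 2) (insert 1 (Function.update φ w y '' (D : Set V))) := by
        refine lt_of_le_of_ne ?_ ?_
        · refine Submodule.span_mono (Set.insert_subset_insert ?_)
          rintro z ⟨v, hv, rfl⟩
          have hv' : v ∈ D.erase w := hv
          obtain ⟨h1, h2⟩ := Finset.mem_erase.1 hv'
          exact ⟨v, h2, Function.update_of_ne h1 _ _⟩
        · intro heq
          apply hyQ
          rw [heq]
          exact Submodule.subset_span (Or.inr ⟨w, hwD, by simp⟩)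
      have := Submodule.finrank_lt_finrank_of_lt hlt
      have h7 := Finset.card_erase_add_one hwD
      simp only [Q] at this
      omega

theorem exists_coords {W : Type} [Fintype W] {G : SimpleGraph W} (hconn : G.Connected)
    {M : Matroid (Sym2 W)} (hM : IsCycleMatroidOf M G)
    {V : Type} {root : V} {parent : V → V} {f : Sym2 W → V}
    (hdec : IsDepthDecomp M root parent f) :
      ∃ φ : V → W → ZMod 2,
        (∀ w, w ≠ root → φ w ∈ constAlong {e ∈ G.edgeSet | ¬ Anc parent w (f e)}) ∧
        Submodule.span (ZMod 2) (insert 1 (φ '' {w | w ≠ root})) = ⊤ := by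
  classical
  have := hdec.1
  let _ := Fintype.ofFinite V
  have := hconn.nonempty
  have hδ := isDepthFun_vdepth hdec.2.1
  obtain ⟨φ, h1, h2⟩ := exists_coords_aux hconn hM hdec _ (Finset.univ.erase root) rfl (by simp) (by
    intro x hx y hxy
    simp only [Finset.mem_erase, Finset.mem_univ, and_true] at hx ⊢
    rintro rfl
    exact hx (hδ.anc_antisymm hxy (hδ.anc_root x)))
  have hset : ((Finset.univ.erase root : Finset V) : Set V) = {w | w ≠ root} := by ext; simp
  refine ⟨φ, fun w hw => h1 w (by simp [hw]), ?_⟩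
  have h3 := card_le_finrank_constAlong hM M.E (by rw [hM.1])
  have h4 : constAlong M.E ≤ Submodule.span (ZMod 2) {(1 : W → ZMod 2)} := by
    intro x hx
    apply constAlong_edgeSet hconn
    intro u v huv
    exact hx u v (by rw [hM.1]; exact huv)
  have h5 := Submodule.finrank_mono h4
  rw [finrank_span_singleton one_ne_zero] at h5
  rw [hdec.2.2.1, ← hset, Set.ncard_coe_finset] at h3
  rw [← hset]
  apply Submodule.eq_top_of_finrank_eq
  apply le_antisymm (Submodule.finrank_le _)
  rw [Module.finrank_fintype_fun_eq_card]
  omega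

/-! ### Cycles are short -/

/-- the coboundary of `x` at the edge `e` -/
def edgeVal {W : Type} (x : W → ZMod 2) : Sym2 W → ZMod 2 :=
  Sym2.lift ⟨fun u v => x u + x v, fun _ _ => add_comm _ _⟩

theorem edgeVal_mk {W : Type} (x : W → ZMod 2) (u v : W) : edgeVal x s(u, v) = x u + x v := rfl

theorem sum_edgeVal_walk {W : Type} {G : SimpleGraph W} (x : W → ZMod 2) {u v : W}
    (p : G.Walk u v) : (p.edges.map (edgeVal x)).sum = x u + x v := by
  induction p with
  | nil => simp [CharTwo.add_self_eq_zero]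
  | @cons a b c h q ih =>
    rw [SimpleGraph.Walk.edges_cons, List.map_cons, List.sum_cons, ih, edgeVal_mk]
    have := CharTwo.add_self_eq_zero (x b)
    linear_combination this

theorem exists_sum_ne_zero {W : Type} [DecidableEq W] {G : SimpleGraph W} {u v : W}
    (p : G.Walk u v) (hp : p.IsPath) (D : Finset (Sym2 W)) (hD : D ⊆ p.edges.toFinset)
    (hne : D.Nonempty) : ∃ x : W → ZMod 2, ∑ e ∈ D, edgeVal x e ≠ 0 := by
  induction p with
  | nil =>
    obtain ⟨e, he⟩ := hne
    simpa using hD he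
  | @cons a b c h q ih =>
    rw [SimpleGraph.Walk.cons_isPath_iff] at hp
    by_cases hmem : s(a, b) ∈ D
    · refine ⟨Pi.single a 1, ?_⟩
      rw [Finset.sum_eq_single_of_mem _ hmem]
      · rw [edgeVal_mk]
        simp [h.ne']
      · intro e he hne'
        have h1 := hD he
        simp only [SimpleGraph.Walk.edges_cons, List.toFinset_cons, Finset.mem_insert,
          List.mem_toFinset] at h1
        have h2 := h1.resolve_left hne'
        induction e with
        | _ y z =>
          have hy := q.fst_mem_support_of_mem_edges h2
          have hz := q.snd_mem_support_of_mem_edges h2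
          have hya : y ≠ a := by rintro rfl; exact hp.2 hy
          have hza : z ≠ a := by rintro rfl; exact hp.2 hz
          rw [edgeVal_mk]
          simp [hya, hza]
    · apply ih hp.1
      intro e he
      have h1 := hD he
      simp only [SimpleGraph.Walk.edges_cons, List.toFinset_cons, Finset.mem_insert,
          List.mem_toFinset] at h1 ⊢
      refine h1.resolve_left ?_
      rintro rfl
      exact hmem he

theorem cycle_length_le {W : Type} [Fintype W] {G : SimpleGraph W} (hconn : G.Connected)
    {M : Matroid (Sym2 W)} (hM : IsCycleMatroidOf M G)
    {V : Type} {root : V} {parent : V → V} {f : Sym2 W → V}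
    (hdec : IsDepthDecomp M root parent f) {u v : W} (huv : G.Adj u v) (p : G.Walk v u)
    (hp : p.IsPath) (hnot : s(u, v) ∉ p.edges) : p.length + 1 ≤ 2 ^ treeDepth root parent := by
  classical
  have := hdec.1
  have hδ := isDepthFun_vdepth hdec.2.1
  obtain ⟨φ, hφ1, hφ2⟩ := exists_coords hconn hM hdec
  let a : Sym2 W → V → ZMod 2 := fun e w =>
    if w ≠ root ∧ e ∈ G.edgeSet then edgeVal (φ w) e else 0
  have ha : ∀ e w, a e w ≠ 0 → Anc parent w (f e) := by
    intro e w hne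
    by_contra hanc
    apply hne
    simp only [a]
    split_ifs with hh
    · induction e with
      | _ y z =>
        rw [edgeVal_mk, hφ1 w hh.1 y z ⟨hh.2, hanc⟩, CharTwo.add_self_eq_zero]
    · rfl
  let C : Finset (Sym2 W) := insert s(u, v) p.edges.toFinset
  have hCG : ∀ e ∈ C, e ∈ G.edgeSet := by
    intro e he
    simp only [C, Finset.mem_insert, List.mem_toFinset] at he
    rcases he with rfl | he
    · exact huv
    · exact p.edges_subset_edgeSet he
  have hnot' : s(u, v) ∉ p.edges.toFinset := by simpa using hnot
  have hCcard : C.card = p.length + 1 := by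
    rw [Finset.card_insert_of_notMem hnot', List.toFinset_card_of_nodup hp.isTrail.edges_nodup,
      SimpleGraph.Walk.length_edges]
  have hsumC : ∀ x : W → ZMod 2, ∑ e ∈ C, edgeVal x e = 0 := by
    intro x
    rw [Finset.sum_insert hnot', List.sum_toFinset _ hp.isTrail.edges_nodup, sum_edgeVal_walk,
      edgeVal_mk, add_comm (x u), CharTwo.add_self_eq_zero]
  have hasum : ∀ X ⊆ C, ∀ w, w ≠ root → ∑ e ∈ X, a e w = ∑ e ∈ X, edgeVal (φ w) e := by
    intro X hX w hw
    apply Finset.sum_congr rfl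
    intro e he
    simp [a, hw, hCG e (hX he)]
  have hall : ∀ X ⊆ C, ZeroBelow parent a root X → ∀ x : W → ZMod 2, ∑ e ∈ X, edgeVal x e = 0 := by
    intro X hX hz x
    have hx : x ∈ Submodule.span (ZMod 2) (insert 1 (φ '' {w | w ≠ root})) := by
      rw [hφ2]; trivial
    induction hx using Submodule.span_induction with
    | mem y hy =>
      rcases hy with rfl | ⟨w, hw, rfl⟩
      · apply Finset.sum_eq_zero
        intro e _
        induction e with
        | _ y z => rw [edgeVal_mk]; exact CharTwo.add_self_eq_zero _
      · rw [← hasum X hX w hw]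
        exact hz w (hδ.anc_root w) hw
    | zero =>
      apply Finset.sum_eq_zero
      intro e _
      induction e with
      | _ y z => rw [edgeVal_mk]; simp
    | add y z _ _ hy hz =>
      have : ∀ e, edgeVal (y + z) e = edgeVal y e + edgeVal z e := by
        intro e
        induction e with
        | _ a b => simp only [edgeVal_mk, Pi.add_apply]; ring
      simp only [this, Finset.sum_add_distrib, hy, hz, add_zero]
    | smul c y _ hy =>
      have : ∀ e, edgeVal (c • y) e = c * edgeVal y e := by
        intro e
        induction e with
        | _ a b => simp only [edgeVal_mk, Pi.smul_apply, smul_eq_mul]; ring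
      simp only [this, ← Finset.mul_sum, hy, mul_zero]
  rw [← hCcard]
  refine card_le_of_minimal hδ f a ha _ root ?_ C ⟨s(u, v), by simp [C]⟩
    (fun e _ => hδ.anc_root _) ?_ ?_
  · intro w _
    have := vdepth_le_treeDepth root parent w
    omega
  · intro w _ hw
    rw [hasum C (Finset.Subset.refl _) w hw, hsumC]
  · intro D hDC hDne hDz
    have hD := hall D hDC hDz
    have hsub : ∀ E ⊆ C, s(u, v) ∉ E → E ⊆ p.edges.toFinset := by
      intro E hE huvE e he
      refine (Finset.mem_insert.1 (hE he)).resolve_left ?_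
      rintro rfl
      exact huvE he
    by_cases hmem : s(u, v) ∈ D
    · by_contra hne
      obtain ⟨x, hx⟩ := exists_sum_ne_zero p hp (C \ D)
        (hsub _ Finset.sdiff_subset (fun hh => (Finset.mem_sdiff.1 hh).2 hmem))
        (Finset.sdiff_nonempty.2 fun hh => hne (Finset.Subset.antisymm hDC hh))
      apply hx
      have h1 := Finset.sum_sdiff (f := edgeVal x) hDC
      rwa [hD x, hsumC x, add_zero] at h1
    · obtain ⟨x, hx⟩ := exists_sum_ne_zero p hp D (hsub D hDC hmem) hDne
      exact absurd (hD x) hx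

/-- `u`-`v`-paths that share only their endpoints have total length at most `L`. -/
def ShortCycles {W : Type} (G : SimpleGraph W) (L : ℕ) : Prop :=
  ∀ (u v : W), u ≠ v → ∀ (P Q : G.Walk u v), P.IsPath → Q.IsPath →
    (∀ y, y ∈ P.support → y ∈ Q.support → y = u ∨ y = v) → P.length + Q.length ≤ L

theorem length_eq_one_of_mem_edges {W : Type} {G : SimpleGraph W} {w u : W} (p : G.Walk w u)
    (hp : p.IsPath) (hmem : s(w, u) ∈ p.edges) : p.length = 1 := by
  cases p with
  | nil => simp at hmem
  | @cons _ b _ h q =>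
    rw [SimpleGraph.Walk.cons_isPath_iff] at hp
    rw [SimpleGraph.Walk.edges_cons, List.mem_cons] at hmem
    rcases hmem with h1 | h1
    · have hub : u = b := by
        rcases Sym2.eq_iff.1 h1 with ⟨_, h2⟩ | ⟨h2, h3⟩
        · exact h2
        · exact absurd h2 h.ne
      subst hub
      have := SimpleGraph.Walk.nil_iff_length_eq.1 (SimpleGraph.Walk.isPath_iff_nil.1 hp.1)
      simp [this]
    · exact absurd (q.fst_mem_support_of_mem_edges h1) hp.2

theorem isPath_append {W : Type} {G : SimpleGraph W} {u v w : W} {p : G.Walk u v} {q : G.Walk v w}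
    (hp : p.IsPath) (hq : q.IsPath) (h : ∀ y, y ∈ p.support → y ∈ q.support → y = v) :
    (p.append q).IsPath := by
  rw [SimpleGraph.Walk.isPath_def, SimpleGraph.Walk.support_append]
  have hq' : (v :: q.support.tail).Nodup := by
    rw [SimpleGraph.Walk.cons_tail_support]; exact hq.support_nodup
  rw [List.nodup_cons] at hq'
  refine List.Nodup.append hp.support_nodup hq'.2 ?_
  intro y hy1 hy2
  have := h y hy1 (List.mem_of_mem_tail hy2)
  subst this
  exact hq'.1 hy2

theorem shortCycles_of_decomp {W : Type} [Fintype W] {G : SimpleGraph W} (hconn : G.Connected)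
    {M : Matroid (Sym2 W)} (hM : IsCycleMatroidOf M G)
    {V : Type} {root : V} {parent : V → V} {f : Sym2 W → V}
    (hdec : IsDepthDecomp M root parent f) (hpos : 2 ≤ 2 ^ treeDepth root parent) :
    ShortCycles G (2 ^ treeDepth root parent) := by
  intro u v huv P Q hP hQ hdis
  cases P with
  | nil => exact absurd rfl huv
  | @cons _ w _ h P' =>
    have hP2 := hP
    rw [SimpleGraph.Walk.cons_isPath_iff] at hP2
    have hp : (P'.append Q.reverse).IsPath := by
      refine isPath_append hP2.1 hQ.reverse ?_
      intro y hy1 hy2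
      rw [SimpleGraph.Walk.support_reverse, List.mem_reverse] at hy2
      rcases hdis y (by simp [hy1]) hy2 with rfl | h1
      · exact absurd hy1 hP2.2
      · exact h1
    have hlen : (P'.append Q.reverse).length + 1 = (SimpleGraph.Walk.cons h P').length + Q.length := by
      simp; ring
    rw [← hlen]
    by_cases hmem : s(w, u) ∈ (P'.append Q.reverse).edges
    · rw [length_eq_one_of_mem_edges _ hp hmem]
      exact hpos
    · rw [Sym2.eq_swap] at hmem
      exact cycle_length_le hconn hM hdec h _ hp hmem

/-! ### Long paths in 2-connected graphs -/

theorem exists_first_hit {W : Type} {G : SimpleGraph W} (C : Set W) {x b : W} (R : G.Walk x b)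
    (hb : b ∈ C) : ∃ (z : W) (_ : z ∈ C) (R1 : G.Walk x z) (R2 : G.Walk z b),
      R = R1.append R2 ∧ ∀ y ∈ R1.support, y ∈ C → y = z := by
  induction R with
  | nil => exact ⟨_, hb, .nil, .nil, rfl, by simp⟩
  | @cons a c d h q ih =>
    by_cases ha : a ∈ C
    · exact ⟨a, ha, .nil, .cons h q, rfl, by simp⟩
    · obtain ⟨z, hz, R1, R2, h1, h2⟩ := ih hb
      refine ⟨z, hz, .cons h R1, R2, by rw [h1]; rfl, ?_⟩
      intro y hy hyC
      rw [SimpleGraph.Walk.support_cons, List.mem_cons] at hy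
      rcases hy with rfl | hy
      · exact absurd hyC ha
      · exact h2 y hy hyC

theorem whitney_step {W : Type} {G : SimpleGraph W} {a b b' z : W} (h : G.Adj b' b)
    (hb'a : b' ≠ a) (P Q : G.Walk a b) (hP : P.IsPath) (hQ : Q.IsPath)
    (hdis : ∀ y, y ∈ P.support → y ∈ Q.support → y = a ∨ y = b)
    (R1 : G.Walk b' z) (hR1 : R1.IsPath) (hzb : z ≠ b) (hzP : z ∈ P.support)
    (hRP : ∀ y ∈ R1.support, y ∈ P.support → y = z)
    (hRQ : ∀ y ∈ R1.support, y ∈ Q.support → y = z) :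
    ∃ P' Q' : G.Walk a b', P'.IsPath ∧ Q'.IsPath ∧
      ∀ y, y ∈ P'.support → y ∈ Q'.support → y = a ∨ y = b' := by
  obtain ⟨P1, P2, hP1, hP2, hPe⟩ := (hP.mem_support_iff_exists_append).1 hzP
  have hP1P : ∀ y ∈ P1.support, y ∈ P.support := by
    intro y hy
    rw [hPe, SimpleGraph.Walk.mem_support_append_iff]
    exact Or.inl hy
  have hbP1 : b ∉ P1.support := by
    intro hb
    rw [hPe] at hP
    exact hP.ne_of_mem_support_of_append (Ne.symm hzb) hb P2.end_mem_support rfl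
  refine ⟨P1.append R1.reverse, Q.concat h.symm, ?_, ?_, ?_⟩
  · refine isPath_append hP1 hR1.reverse ?_
    intro y hy1 hy2
    rw [SimpleGraph.Walk.support_reverse, List.mem_reverse] at hy2
    exact hRP y hy2 (hP1P y hy1)
  · refine hQ.concat ?_ _
    intro hb'
    have hz := hRQ b' R1.start_mem_support hb'
    subst hz
    rcases hdis b' hzP hb' with h1 | h1
    · exact hb'a h1
    · exact hzb h1
  · intro y hy1 hy2
    rw [SimpleGraph.Walk.support_concat, List.mem_append,
      List.mem_singleton] at hy2
    rcases hy2 with hy2 | hy2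
    · left
      rw [SimpleGraph.Walk.mem_support_append_iff, SimpleGraph.Walk.support_reverse,
        List.mem_reverse] at hy1
      rcases hy1 with hy1 | hy1
      · refine (hdis y (hP1P y hy1) hy2).resolve_right ?_
        rintro rfl
        exact hbP1 hy1
      · have := hRQ y hy1 hy2
        subst this
        exact (hdis y hzP hy2).resolve_right hzb
    · exact Or.inr hy2

theorem whitney {W : Type} {G : SimpleGraph W}
    (hdel : ∀ w : W, (SimpleGraph.induce ({w}ᶜ : Set W) G).Connected) {b a : W}
    (p : G.Walk b a) (hne : b ≠ a) :
    ∃ P Q : G.Walk a b, P.IsPath ∧ Q.IsPath ∧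
      ∀ y, y ∈ P.support → y ∈ Q.support → y = a ∨ y = b := by
  classical
  induction p with
  | nil => exact absurd rfl hne
  | @cons b' b a h q ih =>
    by_cases hba : b = a
    · subst hba
      refine ⟨h.symm.toWalk, h.symm.toWalk, ?_, ?_, ?_⟩
      · simp [hne.symm]
      · simp [hne.symm]
      · intro y hy _
        simpa using hy
    · obtain ⟨P, Q, hP, hQ, hdis⟩ := ih hba
      obtain ⟨R, hR, hbR⟩ : ∃ R : G.Walk b' a, R.IsPath ∧ b ∉ R.support := by
        obtain ⟨r⟩ := (hdel b).preconnected ⟨b', h.ne⟩ ⟨a, Ne.symm hba⟩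
        let e := (SimpleGraph.Embedding.induce ({b}ᶜ : Set W) (G := G)).toHom
        refine ⟨(r.map e).bypass, SimpleGraph.Walk.bypass_isPath _, ?_⟩
        intro hb
        have := (r.map e).support_bypass_subset_support hb
        rw [SimpleGraph.Walk.support_map, List.mem_map] at this
        obtain ⟨y, _, hy⟩ := this
        exact y.2 hy
      obtain ⟨z, hz, R1, R2, hRe, hhit⟩ := exists_first_hit
        {y | y ∈ P.support ∨ y ∈ Q.support} R (Or.inl P.start_mem_support)
      have hzb : z ≠ b := by
        rintro rfl
        apply hbR
        rw [hRe, SimpleGraph.Walk.mem_support_append_iff]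
        exact Or.inl R1.end_mem_support
      have hR1 : R1.IsPath := by
        rw [hRe] at hR
        exact hR.of_append_left
      rcases hz with hz | hz
      · exact whitney_step h hne P Q hP hQ hdis R1 hR1 hzb hz
          (fun y hy hh => hhit y hy (Or.inl hh)) (fun y hy hh => hhit y hy (Or.inr hh))
      · exact whitney_step h hne Q P hQ hP (fun y h1 h2 => hdis y h2 h1) R1 hR1 hzb hz
          (fun y hy hh => hhit y hy (Or.inr hh)) (fun y hy hh => hhit y hy (Or.inl hh))

theorem path_length_le_aux {W : Type} [DecidableEq W] {G : SimpleGraph W} {L : ℕ}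
    (hL : ShortCycles G L) (C : Finset W)
    (hC : ∀ y ∈ C, ∀ z ∈ C, ∃ A : G.Walk y z, A.IsPath ∧ ∀ x ∈ A.support, x ∈ C)
    (n : ℕ) : ∀ (z b : W) (R : G.Walk z b), R.length ≤ n → R.IsPath → z ∈ C → b ∈ C →
      R.length + (L - 1) ≤ (L - 1) * (C.filter (· ∈ R.support)).card := by
  induction n with
  | zero =>
    intro z b R hn hR hz hb
    have h1 : 1 ≤ (C.filter (· ∈ R.support)).card :=
      Finset.card_pos.2 ⟨z, by simp [hz]⟩
    have : R.length = 0 := by omega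
    rw [this, zero_add]
    exact Nat.le_mul_of_pos_right _ h1
  | succ n ih =>
    intro z b R hn hR hz hb
    cases R with
    | nil =>
      have h1 : 1 ≤ (C.filter (· ∈ (SimpleGraph.Walk.nil : G.Walk z z).support)).card :=
        Finset.card_pos.2 ⟨z, by simp [hz]⟩
      rw [SimpleGraph.Walk.length_nil, zero_add]
      exact Nat.le_mul_of_pos_right _ h1
    | @cons _ c _ h R' =>
      obtain ⟨z1, hz1, R1, R2, hRe, hhit⟩ := exists_first_hit (C : Set W) R' hb
      subst hRe
      have hR' := hR
      rw [SimpleGraph.Walk.cons_isPath_iff, SimpleGraph.Walk.mem_support_append_iff] at hR'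
      obtain ⟨hpath, hznot⟩ := hR'
      push Not at hznot
      have hzz1 : z ≠ z1 := by
        rintro rfl
        exact hznot.1 R1.end_mem_support
      obtain ⟨A, hA, hAC⟩ := hC z hz z1 hz1
      have hseg := hL z z1 hzz1 (SimpleGraph.Walk.cons h R1) A
        (by rw [SimpleGraph.Walk.cons_isPath_iff]; exact ⟨hpath.of_append_left, hznot.1⟩) hA (by
          intro y hy1 hy2
          rw [SimpleGraph.Walk.support_cons, List.mem_cons] at hy1
          rcases hy1 with hy1 | hy1
          · exact Or.inl hy1
          · exact Or.inr (hhit y hy1 (hAC y hy2)))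
      have hA1 : 1 ≤ A.length := by
        rcases Nat.eq_zero_or_pos A.length with h0 | h0
        · exact absurd (SimpleGraph.Walk.eq_of_length_eq_zero h0) hzz1
        · exact h0
      simp only [SimpleGraph.Walk.length_cons, SimpleGraph.Walk.length_append] at hn hseg ⊢
      have h2 := ih z1 b R2 (by omega) hpath.of_append_right hz1 hb
      have h3 : (C.filter (· ∈ R2.support)).card + 1 ≤
          (C.filter (· ∈ (SimpleGraph.Walk.cons h (R1.append R2)).support)).card := by
        have hzn : z ∉ C.filter (· ∈ R2.support) := by simp [hznot.2]
        rw [← Finset.card_insert_of_notMem hzn]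
        apply Finset.card_le_card
        intro y hy
        simp only [Finset.mem_insert, Finset.mem_filter, SimpleGraph.Walk.support_cons,
          List.mem_cons, SimpleGraph.Walk.mem_support_append_iff] at hy ⊢
        rcases hy with rfl | hy
        · exact ⟨hz, Or.inl rfl⟩
        · exact ⟨hy.1, Or.inr (Or.inr hy.2)⟩
      have h4 := Nat.mul_le_mul_left (L - 1) h3
      rw [Nat.mul_add, Nat.mul_one] at h4
      omega

theorem path_length_le {W : Type} {G : SimpleGraph W} {L : ℕ} (hL : ShortCycles G L)
    (hdel : ∀ w : W, (SimpleGraph.induce ({w}ᶜ : Set W) G).Connected) {a b : W}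
    (R : G.Walk a b) (hR : R.IsPath) : R.length ≤ L * L := by
  classical
  by_cases hab : a = b
  · subst hab
    rw [SimpleGraph.Walk.nil_iff_length_eq.1 (SimpleGraph.Walk.isPath_iff_nil.1 hR)]
    exact Nat.zero_le _
  obtain ⟨P, Q, hP, hQ, hdis⟩ := whitney hdel R.reverse (Ne.symm hab)
  have hlen := hL a b hab P Q hP hQ hdis
  let C : Finset W := P.support.toFinset ∪ Q.support.toFinset
  have hCm : ∀ y, y ∈ C ↔ y ∈ P.support ∨ y ∈ Q.support := by intro y; simp [C]
  have hto : ∀ y ∈ C, ∃ A : G.Walk a y, ∀ x ∈ A.support, x ∈ C := by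
    intro y hy
    rcases (hCm y).1 hy with h1 | h1
    · exact ⟨P.takeUntil y h1, fun x hx =>
        (hCm x).2 (Or.inl (P.support_takeUntil_subset_support h1 hx))⟩
    · exact ⟨Q.takeUntil y h1, fun x hx =>
        (hCm x).2 (Or.inr (Q.support_takeUntil_subset_support h1 hx))⟩
  have hC : ∀ y ∈ C, ∀ z ∈ C, ∃ A : G.Walk y z, A.IsPath ∧ ∀ x ∈ A.support, x ∈ C := by
    intro y hy z hz
    obtain ⟨A, hA⟩ := hto y hy
    obtain ⟨B, hB⟩ := hto z hz
    refine ⟨(A.reverse.append B).bypass, SimpleGraph.Walk.bypass_isPath _, ?_⟩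
    intro x hx
    have := (A.reverse.append B).support_bypass_subset_support hx
    rw [SimpleGraph.Walk.mem_support_append_iff, SimpleGraph.Walk.support_reverse,
      List.mem_reverse] at this
    rcases this with h1 | h1
    · exact hA x h1
    · exact hB x h1
  have hmain := path_length_le_aux hL C hC R.length a b R le_rfl hR
    ((hCm a).2 (Or.inl P.start_mem_support)) ((hCm b).2 (Or.inl P.end_mem_support))
  have hcard : C.card ≤ L := by
    have h1 := Finset.card_union_add_card_inter P.support.toFinset Q.support.toFinset
    rw [List.toFinset_card_of_nodup hP.support_nodup, List.toFinset_card_of_nodup hQ.support_nodup,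
      SimpleGraph.Walk.length_support, SimpleGraph.Walk.length_support] at h1
    have h2 : ({a, b} : Finset W).card ≤ (P.support.toFinset ∩ Q.support.toFinset).card := by
      apply Finset.card_le_card
      intro y hy
      simp only [Finset.mem_insert, Finset.mem_singleton] at hy
      rcases hy with rfl | rfl <;> simp
    rw [Finset.card_pair hab] at h2
    change C.card + _ = _ at h1
    omega
  have h5 : (C.filter (· ∈ R.support)).card ≤ L := (Finset.card_filter_le _ _).trans hcard
  calc R.length ≤ (L - 1) * (C.filter (· ∈ R.support)).card := by omega
    _ ≤ L * L := Nat.mul_le_mul (Nat.sub_le _ _) h5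

/-! ### Depth-first search trees -/

/-- `(root, parent)` is a rooted spanning tree of `G`. -/
def IsSpanningTree {W : Type} (G : SimpleGraph W) (root : W) (parent : W → W) : Prop :=
  IsRootedTree root parent ∧ ∀ w, w ≠ root → G.Adj w (parent w)

theorem exists_spanningTree {W : Type} {G : SimpleGraph W} (hconn : G.Connected) (root : W) :
    ∃ parent, IsSpanningTree G root parent := by
  classical
  have hstep : ∀ w, w ≠ root → ∃ y, G.Adj w y ∧ G.dist w root = G.dist y root + 1 := by
    intro w hw
    obtain ⟨p, hp⟩ := hconn.exists_walk_length_eq_dist w root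
    cases p with
    | nil => exact absurd rfl hw
    | @cons _ y _ h q =>
      refine ⟨y, h, ?_⟩
      have h1 := SimpleGraph.dist_le q
      have h2 := hconn.dist_triangle (u := w) (v := y) (w := root)
      rw [SimpleGraph.dist_eq_one_iff_adj.2 h] at h2
      rw [SimpleGraph.Walk.length_cons] at hp
      omega
  choose! g hg using hstep
  refine ⟨fun w => if w = root then root else g w, ?_, ?_⟩
  · apply IsDepthFun.isRootedTree (δ := fun w => G.dist w root)
    refine ⟨by simp, by simp, ?_⟩
    intro v hv
    simp only [hv, if_false]
    exact (hg v hv).2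
  · intro w hw
    simp only [hw, if_false]
    exact (hg w hw).1

theorem exists_normalTree {W : Type} [Fintype W] {G : SimpleGraph W} (hconn : G.Connected) :
    ∃ root parent, IsSpanningTree G root parent ∧ IsTreeDepthDecompOf G root parent := by
  classical
  obtain ⟨root⟩ := hconn.nonempty
  obtain ⟨q0, hq0⟩ := exists_spanningTree hconn root
  obtain ⟨parent, hpm, hmax⟩ := Finset.exists_max_image
    (Finset.univ.filter fun q : W → W => IsSpanningTree G root q)
    (fun q => ∑ w, vdepth root q w) ⟨q0, by simp [hq0]⟩
  simp only [Finset.mem_filter, Finset.mem_univ, true_and] at hpm hmax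
  have hδ := isDepthFun_vdepth hpm.1
  have key : ∀ u v, G.Adj u v → vdepth root parent u ≤ vdepth root parent v →
      ¬ Anc parent v u → Anc parent u v := by
    intro u v huv hle hvu
    by_contra hanc
    have hur : u ≠ root := by
      rintro rfl
      exact hanc (hδ.anc_root v)
    let δ' : W → ℕ := fun w => if Anc parent u w then
      vdepth root parent w + (vdepth root parent v + 1 - vdepth root parent u)
      else vdepth root parent w
    have hD : IsDepthFun root (Function.update parent u v) δ' := by
      have hroot : ¬ Anc parent u root := fun hh => hur (hδ.anc_antisymm hh (hδ.anc_root u))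
      refine ⟨?_, ?_, ?_⟩
      · rw [Function.update_of_ne (Ne.symm hur)]; exact hδ.1
      · simp only [δ', hroot, if_false]; exact hδ.2.1
      · intro w hw
        by_cases hwu : w = u
        · subst hwu
          simp only [δ', Function.update_self, hanc, if_false, anc_refl, if_true]
          omega
        · rw [Function.update_of_ne hwu]
          have h1 := hδ.2.2 w hw
          by_cases hh : Anc parent u w
          · have h2 := anc_of_ne hh (Ne.symm hwu)
            simp only [δ', hh, h2, if_true]
            omega
          · have h2 : ¬ Anc parent u (parent w) := fun h3 => hh (anc_trans h3 (anc_parent _ _))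
            simp only [δ', hh, h2, if_false]
            exact h1
    have hST : IsSpanningTree G root (Function.update parent u v) := by
      refine ⟨hD.isRootedTree, ?_⟩
      intro w hw
      by_cases hwu : w = u
      · subst hwu; rw [Function.update_self]; exact huv
      · rw [Function.update_of_ne hwu]; exact hpm.2 w hw
    have h1 := hmax _ hST
    have h2 : ∑ w, vdepth root parent w < ∑ w, vdepth root (Function.update parent u v) w := by
      apply Finset.sum_lt_sum
      · intro w _
        rw [(isDepthFun_vdepth hST.1).unique hD w]
        simp only [δ']
        split_ifs <;> omega
      · refine ⟨u, Finset.mem_univ _, ?_⟩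
        rw [(isDepthFun_vdepth hST.1).unique hD u]
        simp only [δ', anc_refl, if_true]
        omega
    omega
  refine ⟨root, parent, hpm, hpm.1, ?_⟩
  intro u v huv
  by_contra hcon
  push Not at hcon
  rcases le_total (vdepth root parent u) (vdepth root parent v) with h1 | h1
  · exact hcon.1 (key u v huv h1 hcon.2)
  · exact hcon.2 (key v u huv.symm h1 hcon.1)

theorem exists_path_of_vdepth {W : Type} {G : SimpleGraph W} {root : W} {parent : W → W}
    (h : IsSpanningTree G root parent) (n : ℕ) : ∀ w, vdepth root parent w = n →
      ∃ p : G.Walk w root, p.IsPath ∧ p.length = n ∧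
        ∀ y ∈ p.support, vdepth root parent y ≤ n := by
  have hδ := isDepthFun_vdepth h.1
  induction n with
  | zero =>
    intro w hw
    have : w = root := by
      by_contra hne
      have := hδ.2.2 w hne
      omega
    subst this
    exact ⟨.nil, by simp, by simp, by simp [hw]⟩
  | succ n ih =>
    intro w hw
    have hne : w ≠ root := by
      rintro rfl
      rw [hδ.2.1] at hw
      omega
    have h1 := hδ.2.2 w hne
    obtain ⟨p, hp1, hp2, hp3⟩ := ih (parent w) (by omega)
    refine ⟨.cons (h.2 w hne) p, ?_, by simp [hp2], ?_⟩
    · rw [SimpleGraph.Walk.cons_isPath_iff]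
      refine ⟨hp1, fun hh => ?_⟩
      have := hp3 w hh
      omega
    · intro y hy
      rw [SimpleGraph.Walk.support_cons, List.mem_cons] at hy
      rcases hy with rfl | hy
      · omega
      · have := hp3 y hy
        omega

/-- Let `G` be a finite simple 2-connected graph (at least three
vertices, connected, and connected after deleting any single vertex) of tree-depth `d`.
Then every depth-decomposition of the cycle matroid `M(G)` of depth `h` satisfies
`4 ^ h ≥ d`; in particular, the branch-depth of `M(G)` is at least `(1/2) log₂ d`. -/
theorem cycleMatroid_depth_of_twoConnected {W : Type} [Fintype W]
    (G : SimpleGraph W) (hcard : 3 ≤ Fintype.card W) (hconn : G.Connected)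
    (hdel : ∀ w : W, (SimpleGraph.induce ({w}ᶜ : Set W) G).Connected)
    (d : ℕ) (hd : graphTreeDepth G = d)
    (M : Matroid (Sym2 W)) (hM : IsCycleMatroidOf M G) :
    ∀ (V : Type) (root : V) (parent : V → V) (f : Sym2 W → V),
      IsDepthDecomp M root parent f → d ≤ 4 ^ treeDepth root parent := by
  intro V root parent f hdec
  have := hdec.1
  have := hconn.nonempty
  have hδ := isDepthFun_vdepth hdec.2.1
  have hpos : 2 ≤ 2 ^ treeDepth root parent := by
    have h3 := card_le_finrank_constAlong hM M.E (by rw [hM.1])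
    have h4 : constAlong M.E ≤ Submodule.span (ZMod 2) {(1 : W → ZMod 2)} := by
      intro x hx
      apply constAlong_edgeSet hconn
      intro u v huv
      exact hx u v (by rw [hM.1]; exact huv)
    have h5 := Submodule.finrank_mono h4
    rw [finrank_span_singleton one_ne_zero] at h5
    rw [hdec.2.2.1] at h3
    have h6 : {v : V | v ≠ root}.Nonempty := by
      apply Set.nonempty_of_ncard_ne_zero
      omega
    obtain ⟨v, hv⟩ := h6
    have h7 := hδ.2.2 v hv
    have h8 := vdepth_le_treeDepth root parent v
    calc 2 = 2 ^ 1 := rfl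
      _ ≤ 2 ^ treeDepth root parent := Nat.pow_le_pow_right (by norm_num) (by omega)
  have hL := shortCycles_of_decomp hconn hM hdec hpos
  obtain ⟨r, q, hST, hTD⟩ := exists_normalTree hconn
  have h1 : graphTreeDepth G ≤ treeDepth r q := Nat.sInf_le ⟨r, q, hTD, rfl⟩
  rw [← hd]
  refine h1.trans ?_
  refine csSup_le (Set.range_nonempty _) ?_
  rintro n ⟨w, rfl⟩
  obtain ⟨p, hp, hlen, -⟩ := exists_path_of_vdepth hST _ w rfl
  rw [← hlen]
  refine (path_length_le hL hdel p hp).trans (le_of_eq ?_)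
  rw [← mul_pow]; norm_num
end

section
/- Let M be a finite matroid and k ≥ 0. Let e₁, …, e_k be distinct elements of M and let C₀, C₁, …, C_k be subsets of the ground set of M such that |C_i| ≥ 3 for all 0 ≤ i ≤ k, C_{i−1} ∩ C_i = {e_i} for all 1 ≤ i ≤ k, and C_i ∩ C_j = ∅ whenever |i − j| ≥ 2. Let e₀ ∈ C₀ \ {e₁}, and for each 1 ≤ i ≤ k let e'_i ∈ C_{i−1} \ {e_{i−1}, e_i}. Define matroids by M₀ = M and M_i = M_{i−1} / (C_{i−1} \ {e_i, e'_i}) for 1 ≤ i ≤ k. If C_i is a circuit of M_i for every 0 ≤ i ≤ k, then M contains a circuit whose size L satisfies L² ≥ |C₀| + |C₁| + ⋯ + |C_k|. -/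
lemma mrank_eq_of_indep {α : Type} {M : Matroid α} {X : Set α} (hX : X.Finite) (hI : M.Indep X) :
    mrank M X = X.ncard := by
  unfold mrank
  apply le_antisymm
  · apply csSup_le
    · exact ⟨X.ncard, X, le_rfl, hI, rfl⟩
    rintro n ⟨I, hIX, -, rfl⟩
    exact Set.ncard_le_ncard hIX hX
  · apply le_csSup
    · refine ⟨X.ncard, ?_⟩
      rintro n ⟨I, hIX, -, rfl⟩
      exact Set.ncard_le_ncard hIX hX
    · exact ⟨X, le_rfl, hI, rfl⟩

lemma indep_of_mrank_eq {α : Type} {M : Matroid α} {X : Set α} (hX : X.Finite)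
    (h : mrank M X = X.ncard) : M.Indep X := by
  have hmem : mrank M X ∈ {n : ℕ | ∃ I : Set α, I ⊆ X ∧ M.Indep I ∧ I.ncard = n} := by
    unfold mrank
    apply Nat.sSup_mem
    · exact ⟨_, ∅, Set.empty_subset _, M.empty_indep, rfl⟩
    · refine ⟨X.ncard, ?_⟩
      rintro n ⟨I, hIX, -, rfl⟩
      exact Set.ncard_le_ncard hIX hX
  obtain ⟨I, hIX, hI, hc⟩ := hmem
  rw [h] at hc
  rwa [Set.eq_of_subset_of_ncard_le hIX hc.ge hX] at hI

lemma eq_contract_of_isContractionBy {α : Type} {M N : Matroid α} [M.Finite] {F : Set α}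
    (hF : M.Indep F) (h : IsContractionBy M F N) : N = M.contract F := by
  have hFf : F.Finite := M.ground_finite.subset hF.subset_ground
  refine Matroid.ext_indep (by simp [h.1]) ?_
  intro I hI
  rw [h.1] at hI
  have hIf : I.Finite := M.ground_finite.subset (hI.trans Set.sdiff_subset)
  have hd : Disjoint F I := (Set.subset_sdiff.1 hI).2.symm
  rw [h.2, hF.contract_indep_iff, mrank_eq_of_indep hFf hF, ← Set.ncard_union_eq hd hFf hIf,
    Set.union_comm I F]
  constructor
  · rintro ⟨-, -, h3⟩
    exact ⟨hd.symm, indep_of_mrank_eq (hFf.union hIf) h3⟩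
  · rintro ⟨-, h3⟩
    exact ⟨hI, hIf, mrank_eq_of_indep (hFf.union hIf) h3⟩

lemma isCircuitOf_iff {α : Type} {M : Matroid α} {C : Set α} :
    IsCircuitOf M C ↔ M.IsCircuit C := by
  rw [Matroid.isCircuit_iff]; rfl

/-- The lifting step. -/
lemma lift_circuit {α : Type} {M : Matroid α} [M.Finite] {C D : Set α} {e f f' : α}
    (hC : M.IsCircuit C) (hf : f ∈ C) (hf' : f' ∈ C) (hff' : f' ≠ f)
    (he : e ∈ C) (hef : e ≠ f) (hef' : e ≠ f')
    (hD : (M.contract (C \ {f, f'})).IsCircuit D) (hfD : f ∈ D) (hDC : C ∩ D = {f}) :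
    ∃ Z, M.IsCircuit Z ∧ e ∈ Z ∧ Z ⊆ C ∪ D ∧ D.ncard + 1 ≤ Z.ncard := by
  set F := C \ {f, f'} with hFdef
  have hFC : F ⊂ C := by
    refine ⟨Set.sdiff_subset, fun h => ?_⟩
    have := h hf
    simp [hFdef] at this
  have hFi : M.Indep F := hC.ssubset_indep hFC
  have heF : e ∈ F := ⟨he, by simp [hef, hef']⟩
  have hpar : (M.contract F).IsCircuit {f, f'} :=
    hC.contract_sdiff_isCircuit (by simp) (by intro x hx; rcases hx with rfl | rfl <;> assumption)
  obtain ⟨Z, hZ, hDZ, hZs⟩ := hD.exists_subset_isCircuit_of_contract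
  have hmem : ∀ x, x ∈ C → x ∈ D → x = f := fun x h1 h2 => by
    have : x ∈ C ∩ D := ⟨h1, h2⟩
    rw [hDC] at this; exact this
  have heD : e ∉ D := fun h => hef (hmem e he h)
  have hf'D : f' ∉ D := fun h => hff' (hmem f' hf' h)
  have hZf : ∀ {Z}, M.IsCircuit Z → Z.Finite := fun h => M.ground_finite.subset h.subset_ground
  by_cases heZ : e ∈ Z
  · refine ⟨Z, hZ, heZ, hZs.trans (by rw [Set.union_comm]; exact Set.union_subset_union_left _ hFC.subset), ?_⟩
    have := Set.ncard_insert_of_notMem heD ((hZf hZ).subset hDZ)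
    rw [← this]
    exact Set.ncard_le_ncard (Set.insert_subset heZ hDZ) (hZf hZ)
  · obtain ⟨Y, hYs, hY, heY⟩ := hC.strong_elimination hZ hf (hDZ hfD) he heZ
    have hYsub : Y ⊆ C ∪ D := by
      intro x hx
      rcases (hYs hx).1 with h | h
      · exact Or.inl h
      · rcases hZs h with h | h
        · exact Or.inr h
        · exact Or.inl h.1
    have hfY : f ∉ Y := fun h => (hYs h).2 rfl
    refine ⟨Y, hY, heY, hYsub, ?_⟩
    have hdep : (M.contract F).Dep (Y \ F) :=
      hY.contract_dep_of_not_subset (fun h => hY.not_indep (hFi.subset h))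
    obtain ⟨K, hKs, hK⟩ := hdep.exists_isCircuit_subset
    have hfK : f ∉ K := fun h => hfY (hKs h).1
    have hKne : K ≠ {f, f'} := by rintro rfl; exact hfK (by simp)
    obtain ⟨L, hLs, hL⟩ := hK.elimination hpar hKne f'
    have hLD : L ⊆ D := by
      intro x hx
      obtain ⟨h1, h2⟩ := hLs hx
      have hxf' : x ≠ f' := h2
      rcases h1 with h | h
      · obtain ⟨hxY, hxF⟩ := hKs h
        rcases hYsub hxY with h3 | h3
        · by_cases hxf : x = f
          · exact hxf ▸ hfD
          · exact absurd ⟨h3, by simp [hxf, hxf']⟩ hxF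
        · exact h3
      · rcases h with rfl | h
        · exact hfD
        · exact absurd h hxf'
    have hLeq : L = D := hL.eq_of_subset_isCircuit hD hLD
    subst hLeq
    have hf'K : f' ∈ K := by
      by_contra hcon
      have hKL : K ⊆ L := by
        intro x hx
        obtain ⟨hxY, hxF⟩ := hKs hx
        rcases hYsub hxY with h3 | h3
        · by_cases hxf : x = f
          · exact hxf ▸ hfD
          · exact absurd ⟨h3, by
              have : x ≠ f' := by rintro rfl; exact hcon hx
              simp [hxf, this]⟩ hxF
        · exact h3
      have := hK.eq_of_subset_isCircuit hL hKL
      exact hfK (this ▸ hfD)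
    have hLf : L.Finite := (hZf hZ).subset hDZ
    have hsub : insert e (insert f' (L \ {f})) ⊆ Y := by
      intro x hx
      rcases hx with rfl | rfl | ⟨h1, h2⟩
      · exact heY
      · exact (hKs hf'K).1
      · obtain ⟨h3, h4⟩ := hLs h1
        rcases h3 with h | h
        · exact (hKs h).1
        · rcases h with h | h
          · exact absurd h h2
          · exact absurd h h4
    have h1 := Set.ncard_le_ncard hsub (hZf hY)
    rw [Set.ncard_insert_of_notMem (by simp [hef', heD]) ((hLf.sdiff).insert _),
      Set.ncard_insert_of_notMem (by simp [hf'D]) hLf.sdiff,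
      Set.ncard_sdiff_singleton_add_one hfD hLf] at h1
    exact h1

/-- **Under the chain-of-circuits hypotheses, `M` has a circuit whose size `L` satisfies `L² ≥ |C₀| + ⋯ + |C_k|`.** -/
theorem exists_circuit_sq_ge_sum_of_circuit_chain {α : Type} (M : Matroid α) [M.Finite] (k : ℕ)
    -- `e 0` is the element `e₀ ∈ C₀`; `e 1, …, e k` are the elements `e₁, …, e_k`.
    (e : Fin (k + 1) → α) (he : ∀ i : Fin (k + 1), e i ∈ M.E)
    -- the elements `e₁, …, e_k` are distinct
    (hinj : ∀ i j : Fin (k + 1), 1 ≤ i.val → 1 ≤ j.val → e i = e j → i = j)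
    (C : Fin (k + 1) → Set α) (hCE : ∀ i : Fin (k + 1), C i ⊆ M.E)
    -- `|C_i| ≥ 3` for all `i`
    (hcard : ∀ i : Fin (k + 1), 3 ≤ (C i).ncard)
    -- `C_{i-1} ∩ C_i = {e_i}` for `1 ≤ i ≤ k`
    (hinter : ∀ i : Fin k, C i.castSucc ∩ C i.succ = {e i.succ})
    -- `C_i ∩ C_j = ∅` whenever `|i - j| ≥ 2`
    (hdisj : ∀ i j : Fin (k + 1), i.val + 2 ≤ j.val → C i ∩ C j = ∅)
    -- `e₀ ∈ C₀ \ {e₁}`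
    (he0 : e 0 ∈ C 0) (he01 : ∀ i : Fin (k + 1), i.val = 1 → e 0 ≠ e i)
    -- `e'_i ∈ C_{i-1} \ {e_{i-1}, e_i}` for `1 ≤ i ≤ k` (with `e' i` playing `e'_{i+1}`)
    (e' : Fin k → α)
    (he' : ∀ i : Fin k, e' i ∈ C i.castSucc ∧ e' i ≠ e i.castSucc ∧ e' i ≠ e i.succ)
    -- `M₀ = M` and `M_i = M_{i-1} / (C_{i-1} \ {e_i, e'_i})` for `1 ≤ i ≤ k`
    (Ms : Fin (k + 1) → Matroid α) (hMs0 : Ms 0 = M)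
    (hMsStep : ∀ i : Fin k,
      IsContractionBy (Ms i.castSucc) (C i.castSucc \ {e i.succ, e' i}) (Ms i.succ))
    -- `C_i` is a circuit of `M_i` for every `i`
    (hcirc : ∀ i : Fin (k + 1), IsCircuitOf (Ms i) (C i)) :
    -- conclusion: `M` has a circuit of size `L` with `L² ≥ |C₀| + |C₁| + ⋯ + |C_k|`
    ∃ Z : Set α, IsCircuitOf M Z ∧ ∑ i : Fin (k + 1), (C i).ncard ≤ Z.ncard ^ 2 := by
  have heC : ∀ i, e i ∈ C i := by
    intro i
    induction i using Fin.cases with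
    | zero => exact he0
    | succ i =>
      have : e i.succ ∈ C i.castSucc ∩ C i.succ := by rw [hinter]; rfl
      exact this.2
  have heC' : ∀ i : Fin k, e i.succ ∈ C i.castSucc := fun i => by
    have : e i.succ ∈ C i.castSucc ∩ C i.succ := by rw [hinter]; rfl
    exact this.1
  have hne : ∀ i : Fin k, e i.castSucc ≠ e i.succ := by
    intro i h
    by_cases h0 : i.val = 0
    · have : i.castSucc = 0 := by ext; simpa using h0
      rw [this] at h
      exact he01 i.succ (by simp [h0]) h
    · have := hinj i.castSucc i.succ (by simp; omega) (by simp) h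
      have := congrArg Fin.val this
      simp at this
  have hfin : ∀ i, (Ms i).Finite := by
    intro i
    induction i using Fin.induction with
    | zero => rw [hMs0]; infer_instance
    | succ i ih =>
      refine ⟨?_⟩
      rw [(hMsStep i).1]
      exact (Ms i.castSucc).ground_finite.subset Set.sdiff_subset
  have hcirc' : ∀ i, (Ms i).IsCircuit (C i) := fun i => isCircuitOf_iff.1 (hcirc i)
  have hstep : ∀ i : Fin k,
      Ms i.succ = (Ms i.castSucc).contract (C i.castSucc \ {e i.succ, e' i}) := by
    intro i
    have := hfin i.castSucc
    refine eq_contract_of_isContractionBy ?_ (hMsStep i)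
    refine ((hcirc' i.castSucc).sdiff_singleton_indep (heC' i)).subset ?_
    intro x hx
    exact ⟨hx.1, fun h => hx.2 (Or.inl h)⟩
  have key : ∀ (j : Fin (k + 1)) (m : ℕ) (i : Fin (k + 1)), i.val + m = j.val →
      ∃ Z, (Ms i).IsCircuit Z ∧ e i ∈ Z ∧ (∀ x ∈ Z, ∃ l : Fin (k + 1), i ≤ l ∧ x ∈ C l) ∧
        (C j).ncard + m ≤ Z.ncard := by
    intro j m
    induction m with
    | zero =>
      intro i hij
      have : i = j := Fin.ext (by simpa using hij)
      subst this
      exact ⟨C i, hcirc' i, heC i, fun x hx => ⟨i, le_rfl, hx⟩, le_rfl⟩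
    | succ m ih =>
      intro i hij
      obtain ⟨i, rfl⟩ : ∃ i' : Fin k, i = i'.castSucc := by
        refine ⟨⟨i.val, by have := j.isLt; omega⟩, ?_⟩
        ext; rfl
      obtain ⟨D, hD, heD, hDs, hDc⟩ := ih i.succ (by simp at hij ⊢; omega)
      rw [hstep i] at hD
      have := hfin i.castSucc
      have hCD : C i.castSucc ∩ D = {e i.succ} := by
        apply Set.Subset.antisymm
        · rintro x ⟨hxC, hxD⟩
          obtain ⟨l, hl, hxl⟩ := hDs x hxD
          by_cases h : l = i.succ
          · subst h
            rw [← hinter i]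
            exact ⟨hxC, hxl⟩
          · exfalso
            have hlt : i.castSucc.val + 2 ≤ l.val := by
              have h1 : i.succ.val ≤ l.val := hl
              have h2 : l.val ≠ i.succ.val := fun h' => h (Fin.ext h')
              simp at h1 h2 ⊢
              omega
            have : x ∈ C i.castSucc ∩ C l := ⟨hxC, hxl⟩
            rw [hdisj _ _ hlt] at this
            exact this
        · rintro x rfl
          exact ⟨heC' i, heD⟩
      obtain ⟨Z, hZ, heZ, hZs, hZc⟩ := lift_circuit (hcirc' i.castSucc) (heC' i) (he' i).1
        (he' i).2.2 (heC i.castSucc) (hne i) (he' i).2.1.symm hD heD hCD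
      refine ⟨Z, hZ, heZ, ?_, by omega⟩
      intro x hx
      rcases hZs hx with h | h
      · exact ⟨_, le_rfl, h⟩
      · obtain ⟨l, hl, hxl⟩ := hDs x h
        exact ⟨l, (Fin.castSucc_lt_succ (i := i)).le.trans hl, hxl⟩
  have key0 : ∀ j : Fin (k + 1), ∃ Z, M.IsCircuit Z ∧ (C j).ncard + j.val ≤ Z.ncard := by
    intro j
    obtain ⟨Z, hZ, -, -, hc⟩ := key j j.val 0 (by simp)
    rw [hMs0] at hZ
    exact ⟨Z, hZ, hc⟩
  choose Z hZ hZc using key0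
  obtain ⟨j, -, hj⟩ := Finset.exists_max_image Finset.univ (fun j => (Z j).ncard)
    ⟨0, Finset.mem_univ _⟩
  refine ⟨Z j, isCircuitOf_iff.2 (hZ j), ?_⟩
  have h1 : ∀ i, (C i).ncard ≤ (Z j).ncard := fun i => by
    have := hj i (Finset.mem_univ _)
    have := hZc i

    omega
  have h2 : k + 1 ≤ (Z j).ncard := by
    have h3 := hj (Fin.last k) (Finset.mem_univ _)
    have h4 := hZc (Fin.last k)
    have h5 := hcard (Fin.last k)
    simp only [Fin.val_last] at h4
    omega
  calc ∑ i : Fin (k + 1), (C i).ncard ≤ ∑ i : Fin (k + 1), (Z j).ncard :=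
        Finset.sum_le_sum (fun i _ => h1 i)
    _ = (k + 1) * (Z j).ncard := by simp
    _ ≤ (Z j).ncard ^ 2 := by rw [sq]; exact Nat.mul_le_mul_right _ h2
end

section
/- Let M be a finite matroid that has at least one circuit, and suppose that every circuit of M has size at most ℓ. Then M has a depth-decomposition of depth at most ℓ²; that is, the branch-depth of M is at most ℓ². -/
namespace BD
open Set
open scoped Matroid

/-- Depth-decomposition of an abstract rank function. -/
def DD {α : Type} (r : Set α → ℕ) (E : Set α) (d : ℕ) : Prop :=
  ∃ (V : Type) (root : V) (parent : V → V) (f : α → V),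
    Finite V ∧ parent root = root ∧ (∀ v, parent^[d] v = root) ∧
    r E = Set.ncard {v : V | v ≠ root} ∧
    ∀ X : Set α, X ⊆ E →
      r X ≤ Set.ncard {v : V | v ≠ root ∧ ∃ e ∈ X, Anc parent v (f e)}

lemma iterate_root {V : Type} {root : V} {parent : V → V} (h : parent root = root) (n : ℕ) :
    parent^[n] root = root := Function.iterate_fixed h n

lemma iterate_ge {V : Type} {root : V} {parent : V → V} (h : parent root = root) {m n : ℕ}
    (hmn : m ≤ n) {v : V} (hv : parent^[m] v = root) : parent^[n] v = root := by
  obtain ⟨k, rfl⟩ := Nat.exists_eq_add_of_le hmn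
  rw [Nat.add_comm, Function.iterate_add_apply, hv, iterate_root h]

lemma DD.mono {α : Type} {r : Set α → ℕ} {E : Set α} {d d' : ℕ} (h : DD r E d) (hd : d ≤ d') :
    DD r E d' := by
  obtain ⟨V, root, parent, f, h1, h2, h3, h4, h5⟩ := h
  exact ⟨V, root, parent, f, h1, h2, fun v => iterate_ge h2 hd (h3 v), h4, h5⟩

lemma DD.to_le {α : Type} {M : Matroid α} {d : ℕ} (h : DD (mrank M) M.E d) :
    HasDepthDecompOfDepthLE M d := by
  obtain ⟨V, root, parent, f, h1, h2, h3, h4, h5⟩ := h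
  refine ⟨V, root, parent, f, ⟨h1, ⟨h2, fun v => ⟨d, h3 v⟩⟩, h4, h5⟩, ?_⟩
  unfold treeDepth
  apply csSup_le (Set.range_nonempty_iff_nonempty.2 ⟨root⟩)
  rintro _ ⟨v, rfl⟩
  exact Nat.sInf_le (h3 v)

lemma DD.zero {α : Type} (E : Set α) : DD (fun _ => 0) E 0 := by
  refine ⟨Unit, (), id, fun _ => (), inferInstance, rfl, fun v => rfl, ?_, fun _ _ => Nat.zero_le _⟩
  simp

/-- Add one edge above the root. -/
lemma DD.succ {α : Type} {r r' : Set α → ℕ} {E : Set α} {d : ℕ} (h : DD r E d)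
    (h0 : r' ∅ = 0) (hE : r' E = r E + 1) (hr : ∀ X ⊆ E, r' X ≤ r X + 1) : DD r' E (d + 1) := by
  classical
  obtain ⟨V, root, parent, f, h1, h2, h3, h4, h5⟩ := h
  let p : Option V → Option V := fun o => o.elim none
    (fun v => if v = root then none else some (parent v))
  have hps : ∀ v, v ≠ root → p (some v) = some (parent v) := fun v hv => by simp [p, hv]
  have hpr : p (some root) = none := by simp [p]
  have hit : ∀ n v, p^[n] (some v) = some (parent^[n] v) ∨
      (p^[n] (some v) = none ∧ parent^[n] v = root) := by
    intro n v
    induction n with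
    | zero => simp
    | succ n ih =>
      rw [Function.iterate_succ_apply', Function.iterate_succ_apply']
      rcases ih with ih | ⟨ih, ih'⟩
      · rw [ih]
        by_cases hv : parent^[n] v = root
        · right; rw [hv, hpr]; exact ⟨rfl, h2⟩
        · left; exact hps _ hv
      · right; rw [ih, ih']; exact ⟨rfl, h2⟩
  have hanc : ∀ u v, Anc parent u v → Anc p (some u) (some v) := by
    intro u v ⟨n, hn⟩
    induction n generalizing v with
    | zero => exact ⟨0, by simpa using hn⟩
    | succ n ih =>
      by_cases hv : v = root
      · subst hv; rw [iterate_root h2] at hn; exact ⟨0, by simp [hn]⟩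
      · obtain ⟨m, hm⟩ := ih (parent v) (by simpa using hn)
        exact ⟨m + 1, by rw [Function.iterate_succ_apply, hps _ hv, hm]⟩
  refine ⟨Option V, none, p, fun e => some (f e), inferInstance, rfl, ?_, ?_, ?_⟩
  · rintro (_ | v)
    · exact iterate_root (parent := p) rfl _
    · rw [Function.iterate_succ_apply']
      rcases hit d v with h | h
      · rw [h, h3 v, hpr]
      · rw [h.1]; rfl
  · have : {v : Option V | v ≠ none} = some '' (insert root {v : V | v ≠ root}) := by
      ext v; cases v <;> simp [em]
    rw [this, ncard_image_of_injective _ (Option.some_injective _),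
      ncard_insert_of_notMem (by simp), hE, h4]
  · intro X hX
    rcases X.eq_empty_or_nonempty with rfl | ⟨e, he⟩
    · rw [h0]; exact Nat.zero_le _
    refine (hr X hX).trans ?_
    have hsub : some '' (insert root {v : V | v ≠ root ∧ ∃ e ∈ X, Anc parent v (f e)}) ⊆
        {v : Option V | v ≠ none ∧ ∃ e ∈ X, Anc p v (some (f e))} := by
      rintro _ ⟨v, hv, rfl⟩
      refine ⟨by simp, ?_⟩
      rcases hv with rfl | ⟨_, e, he, ha⟩
      · exact ⟨e, he, hanc _ _ ⟨d, h3 _⟩⟩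
      · exact ⟨e, he, hanc _ _ ha⟩
    have := ncard_le_ncard hsub (toFinite _)
    rw [ncard_image_of_injective _ (Option.some_injective _),
      ncard_insert_of_notMem (by simp)] at this
    have h6 := h5 X hX
    change r X + 1 ≤ ncard {v : Option V | v ≠ none ∧ ∃ e ∈ X, Anc p v (some (f e))}
    omega

lemma DD.add {α : Type} {r r' : Set α → ℕ} {E : Set α} {d : ℕ} (h : DD r E d) (k : ℕ)
    (h0 : r' ∅ = 0) (hE : r' E = r E + k) (hr : ∀ X ⊆ E, r' X ≤ r X + k) : DD r' E (d + k) := by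
  induction k generalizing r' with
  | zero =>
    obtain ⟨V, root, parent, f, h1, h2, h3, h4, h5⟩ := h
    exact ⟨V, root, parent, f, h1, h2, h3, by rw [hE, ← h4]; rfl,
      fun X hX => (hr X hX).trans (h5 X hX)⟩
  | succ k ih =>
    classical
    rcases E.eq_empty_or_nonempty with rfl | hne
    · omega
    have := ih (r' := fun X => if X = ∅ then 0 else r X + k) (by simp) (by simp [hne.ne_empty])
      (fun X _ => by split_ifs <;> omega)
    refine this.succ h0 ?_ ?_
    · simp [hne.ne_empty, hE]; omega
    · intro X hX
      split_ifs with hX0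
      · rw [hX0, h0]; omega
      · have := hr X hX; omega

/-- Glue two decompositions at their roots. -/
lemma DD.sum {α : Type} {r r₁ r₂ : Set α → ℕ} {E S T : Set α} {d : ℕ} (h₁ : DD r₁ S d)
    (h₂ : DD r₂ T d) (hST : Disjoint S T) (hE : r E = r₁ S + r₂ T)
    (hr : ∀ X ⊆ E, r X ≤ r₁ (X ∩ S) + r₂ (X ∩ T)) : DD r E d := by
  classical
  obtain ⟨V₁, o₁, p₁, f₁, hf₁, hp₁, hd₁, he₁, hx₁⟩ := h₁
  obtain ⟨V₂, o₂, p₂, f₂, hf₂, hp₂, hd₂, he₂, hx₂⟩ := h₂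
  let V := {q : V₁ × V₂ // q.1 = o₁ ∨ q.2 = o₂}
  let p : V → V := fun q => ⟨(p₁ q.1.1, p₂ q.1.2), by
    rcases q.2 with h | h
    · left; simp [h, hp₁]
    · right; simp [h, hp₂]⟩
  let i₁ : V₁ → V := fun v => ⟨(v, o₂), Or.inr rfl⟩
  let i₂ : V₂ → V := fun v => ⟨(o₁, v), Or.inl rfl⟩
  have hi₁ : Function.Injective i₁ := fun a b h => congrArg (fun q : V => q.1.1) h
  have hi₂ : Function.Injective i₂ := fun a b h => congrArg (fun q : V => q.1.2) h
  have hit : ∀ n (q : V), (p^[n] q).1 = (p₁^[n] q.1.1, p₂^[n] q.1.2) := by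
    intro n q
    induction n generalizing q with
    | zero => rfl
    | succ n ih => rw [Function.iterate_succ_apply, ih]; rfl
  have ha₁ : ∀ u v, Anc p₁ u v → Anc p (i₁ u) (i₁ v) := by
    rintro u v ⟨n, rfl⟩
    exact ⟨n, Subtype.ext (by rw [hit]; simp [i₁, iterate_root hp₂])⟩
  have ha₂ : ∀ u v, Anc p₂ u v → Anc p (i₂ u) (i₂ v) := by
    rintro u v ⟨n, rfl⟩
    exact ⟨n, Subtype.ext (by rw [hit]; simp [i₂, iterate_root hp₁])⟩
  have hdis : ∀ (A : Set V₁) (B : Set V₂), o₁ ∉ A → (i₁ '' A ∪ i₂ '' B).ncard =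
      A.ncard + B.ncard := by
    intro A B hA
    rw [ncard_union_eq, ncard_image_of_injective _ hi₁, ncard_image_of_injective _ hi₂]
    rw [Set.disjoint_left]
    rintro _ ⟨a, ha, rfl⟩ ⟨b, hb, hab⟩
    have h1 : o₁ = a := congrArg (fun q : V => q.1.1) hab
    exact hA (h1 ▸ ha)
  refine ⟨V, ⟨(o₁, o₂), Or.inl rfl⟩, p, fun e => if e ∈ S then i₁ (f₁ e) else i₂ (f₂ e),
    inferInstance, ?_, ?_, ?_, ?_⟩
  · exact Subtype.ext (by simp [p, hp₁, hp₂])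
  · intro q
    exact Subtype.ext (by rw [hit]; simp [hd₁, hd₂])
  · rw [hE, he₁, he₂, ← hdis _ _ (by simp)]
    congr 1
    ext ⟨⟨a, b⟩, hab⟩
    constructor
    · rintro (⟨x, hx, h⟩ | ⟨x, hx, h⟩) h'
      · have h1 : x = a := congrArg (fun q : V => q.1.1) h
        have h2 : a = o₁ := congrArg (fun q : V => q.1.1) h'
        exact hx (h1.trans h2)
      · have h1 : x = b := congrArg (fun q : V => q.1.2) h
        have h2 : b = o₂ := congrArg (fun q : V => q.1.2) h'
        exact hx (h1.trans h2)
    · intro h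
      rcases hab with h' | h'
      · exact Or.inr ⟨b, fun hb => h (Subtype.ext (Prod.ext h' hb)),
          Subtype.ext (Prod.ext h'.symm rfl)⟩
      · exact Or.inl ⟨a, fun ha => h (Subtype.ext (Prod.ext ha h')),
          Subtype.ext (Prod.ext rfl h'.symm)⟩
  · intro X hX
    refine (hr X hX).trans ((add_le_add (hx₁ _ inter_subset_right)
      (hx₂ _ inter_subset_right)).trans ?_)
    rw [← hdis _ _ (by simp)]
    apply ncard_le_ncard _ (toFinite _)
    rintro _ (⟨v, ⟨hv, e, he, ha⟩, rfl⟩ | ⟨v, ⟨hv, e, he, ha⟩, rfl⟩)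
    · refine ⟨fun h => hv (congrArg (fun q : V => q.1.1) h), e, he.1, ?_⟩
      simpa [he.2] using ha₁ _ _ ha
    · refine ⟨fun h => hv (congrArg (fun q : V => q.1.2) h), e, he.1, ?_⟩
      have : e ∉ S := fun h => hST.le_bot ⟨h, he.2⟩
      simpa [this] using ha₂ _ _ ha

noncomputable def rho {α : Type} (M : Matroid α) (X : Set α) : ℕ := (M.eRk X).toNat

section rank
variable {α : Type} {M : Matroid α} [M.Finite]

lemma rho_cast (X : Set α) : (rho M X : ℕ∞) = M.eRk X :=
  ENat.natCast_toNat (Matroid.eRk_ne_top_iff.2 (M.isRkFinite_set X))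

lemma fin_of_sub {X : Set α} (h : X ⊆ M.E) : X.Finite := M.ground_finite.subset h

lemma rho_mono {X Y : Set α} (h : X ⊆ Y) : rho M X ≤ rho M Y := by
  have := M.eRk_mono h
  rw [← rho_cast, ← rho_cast] at this
  exact_mod_cast this

lemma rho_submod (X Y : Set α) : rho M (X ∩ Y) + rho M (X ∪ Y) ≤ rho M X + rho M Y := by
  have := M.eRk_inter_add_eRk_union_le X Y
  simp only [← rho_cast] at this
  exact_mod_cast this

/-- convenient form of submodularity -/
lemma rho_submod' {X Y A B : Set α} (hA : A ⊆ X) (hA' : A ⊆ Y) (hB : B ⊆ X ∪ Y) :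
    rho M A + rho M B ≤ rho M X + rho M Y :=
  (add_le_add (rho_mono (subset_inter hA hA')) (rho_mono hB)).trans (rho_submod X Y)

lemma rho_indep {I : Set α} (h : M.Indep I) : rho M I = I.ncard := by
  rw [rho, h.eRk_eq_encard]; rfl

lemma rho_empty : rho M ∅ = 0 := by simp [rho]

lemma rho_le_ncard {X : Set α} (h : X ⊆ M.E) : rho M X ≤ X.ncard := by
  have := M.eRk_le_encard X
  rw [← rho_cast, ← (fin_of_sub h).cast_ncard_eq] at this
  exact_mod_cast this

lemma rho_dep {X : Set α} (h : M.Dep X) : rho M X < X.ncard := by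
  have := h.eRk_lt_encard
  rw [← rho_cast, ← (fin_of_sub h.subset_ground).cast_ncard_eq] at this
  exact_mod_cast this

lemma rho_circuit {C : Set α} (h : M.IsCircuit C) : rho M C + 1 = C.ncard := by
  obtain ⟨e, he⟩ := h.nonempty
  have h1 := rho_indep (h.sdiff_singleton_indep he)
  have h2 : rho M (C \ {e}) ≤ rho M C := rho_mono sdiff_subset
  have h3 := rho_dep h.dep
  rw [ncard_sdiff_singleton_of_mem he] at h1
  omega

lemma mrank_eq (X : Set α) : mrank M X = rho M X := by
  apply IsGreatest.csSup_eq
  constructor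
  · obtain ⟨I, hI⟩ := M.exists_isBasis' X
    refine ⟨I, hI.subset, hI.indep, ?_⟩
    rw [← rho_indep hI.indep, rho, rho, hI.eRk_eq_eRk]
  · rintro n ⟨I, hIX, hI, rfl⟩
    rw [← rho_indep hI]
    exact rho_mono hIX

lemma contract_finite (C : Set α) : (M ／ C).Finite := ⟨M.ground_finite.subset sdiff_subset⟩

lemma rho_contract {C X : Set α} (hC : C ⊆ M.E) (hX : X ⊆ M.E) :
    rho M (X ∪ C) = rho (M ／ C) X + rho M C := by
  obtain ⟨I, hI⟩ := M.exists_isBasis C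
  obtain ⟨J, hJ⟩ := (M ／ C).exists_isBasis' X
  haveI := contract_finite (M := M) C
  obtain ⟨hJI, hd⟩ := hI.contract_indep_iff.1 hJ.indep
  have e1 : rho (M ／ C) X = J.ncard := by
    rw [← rho_indep hJ.indep, rho, rho, hJ.eRk_eq_eRk]
  have e2 : rho M C = I.ncard := by
    rw [← rho_indep hI.indep, rho, rho, hI.eRk_eq_eRk]
  have hfin := fin_of_sub hJI.subset_ground
  have e3 : rho M (J ∪ I) = J.ncard + I.ncard := by
    rw [rho_indep hJI, ncard_union_eq (hd.symm.mono_right hI.subset)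
      (hfin.subset subset_union_left) (hfin.subset subset_union_right)]
  rw [e1, e2, ← e3]
  apply le_antisymm
  · rw [rho, rho, ← M.eRk_closure_eq (J ∪ I)]
    apply ENat.toNat_le_toNat _ (Matroid.eRk_ne_top_iff.2 (M.isRkFinite_set _))
    apply M.eRk_mono
    have hIc : C ⊆ M.closure (J ∪ I) :=
      hI.subset_closure.trans (M.closure_subset_closure subset_union_right)
    refine union_subset (fun x hx => ?_) hIc
    by_cases hxC : x ∈ C
    · exact hIc hxC
    by_cases hxJ : x ∈ J
    · exact M.subset_closure _ hJI.subset_ground (Or.inl hxJ)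
    have h1 : ¬ (M ／ C).Indep (insert x J) := fun h =>
      hxJ (hJ.mem_of_insert_indep hx h)
    rw [hI.contract_indep_iff, insert_union] at h1
    have h2 : ¬ M.Indep (insert x (J ∪ I)) := fun h => h1 ⟨h, by
      rw [disjoint_insert_right]; exact ⟨hxC, hd⟩⟩
    by_contra hcl
    exact h2 ((hJI.notMem_closure_iff (hX hx)).1 hcl).1
  · exact rho_mono (union_subset_union hJ.subset hI.subset)

/-- circuit-separators are additive -/
lemma rho_sep {S : Set α} (hS : S ⊆ M.E)
    (hsep : ∀ Z, M.IsCircuit Z → (Z ∩ S).Nonempty → Z ⊆ S) :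
    rho M M.E = rho M S + rho M (M.E \ S) := by
  obtain ⟨I, hI⟩ := M.exists_isBasis S
  obtain ⟨J, hJ⟩ := M.exists_isBasis (M.E \ S)
  have e1 : rho M S = I.ncard := by
    rw [← rho_indep hI.indep, rho, rho, hI.eRk_eq_eRk]
  have e2 : rho M (M.E \ S) = J.ncard := by
    rw [← rho_indep hJ.indep, rho, rho, hJ.eRk_eq_eRk]
  have hin : M.Indep (I ∪ J) := by
    rw [Matroid.indep_iff_forall_subset_not_isCircuit
      (union_subset hI.indep.subset_ground hJ.indep.subset_ground)]
    intro Z hZ hc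
    by_cases h : (Z ∩ S).Nonempty
    · have hZS := hsep Z hc h
      refine hc.not_indep (hI.indep.subset fun z hz => ?_)
      rcases hZ hz with h | h
      · exact h
      · exact absurd (hZS hz) (hJ.subset h).2
    · refine hc.not_indep (hJ.indep.subset fun z hz => ?_)
      rcases hZ hz with h' | h'
      · exact absurd ⟨z, hz, hI.subset h'⟩ h
      · exact h'
  have hd : Disjoint I J := disjoint_sdiff_right.mono hI.subset hJ.subset
  have e3 := rho_indep hin
  rw [ncard_union_eq hd (fin_of_sub hI.indep.subset_ground) (fin_of_sub hJ.indep.subset_ground)] at e3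
  have e4 : rho M (I ∪ J) ≤ rho M M.E := rho_mono hin.subset_ground
  have e5 := rho_submod' (M := M) (X := S) (Y := M.E \ S) (A := ∅) (B := M.E)
    (empty_subset _) (empty_subset _) (by rw [union_sdiff_cancel hS])
  omega

end rank

section circ
variable {α : Type} {M : Matroid α} [M.Finite]

/-- transitivity of circuit connection to a set `C` -/
lemma conn_trans {C : Set α} {w : α} (n : ℕ) : ∀ Z W : Set α, (Z ∪ W).ncard ≤ n →
    M.IsCircuit Z → M.IsCircuit W → (Z ∩ C).Nonempty → (Z ∩ W).Nonempty → w ∈ W →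
    ∃ Y, M.IsCircuit Y ∧ (Y ∩ C).Nonempty ∧ w ∈ Y := by
  induction n with
  | zero =>
    intro Z W hn hZ hW _ _ hw
    have hf : (Z ∪ W).Finite := fin_of_sub (union_subset hZ.subset_ground hW.subset_ground)
    have : Z ∪ W = ∅ := (ncard_eq_zero hf).1 (by omega)
    exact absurd (this ▸ Or.inr hw : w ∈ (∅ : Set α)) (notMem_empty _)
  | succ n ih =>
    intro Z W hn hZ hW hZC hZW hw
    have hf : (Z ∪ W).Finite := fin_of_sub (union_subset hZ.subset_ground hW.subset_ground)
    have small : ∀ Y a, Y ⊆ Z ∪ W → a ∈ Z ∪ W → a ∉ Y → Y.ncard ≤ n := by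
      intro Y a hY ha haY
      have := ncard_lt_ncard (ssubset_of_subset_not_subset hY (fun h => haY (h ha))) hf
      omega
    by_cases hwZ : w ∈ Z
    · exact ⟨Z, hZ, hZC, hwZ⟩
    by_cases hWC : (W ∩ C).Nonempty
    · exact ⟨W, hW, hWC, hw⟩
    obtain ⟨t, htZ, htW⟩ := hZW
    obtain ⟨c, hcZ, hcC⟩ := hZC
    have hcW : c ∉ W := fun h => hWC ⟨c, h, hcC⟩
    obtain ⟨W1, hW1s, hW1, hwW1⟩ := hW.strong_elimination hZ htW htZ hw hwZ
    obtain ⟨Z1, hZ1s, hZ1, hcZ1⟩ := hZ.strong_elimination hW htZ htW hcZ hcW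
    have hW1Z : (Z ∩ W1).Nonempty := by
      by_contra hne
      have : W1 ⊆ W := fun x hx => by
        rcases (hW1s hx).1 with h | h
        · exact h
        · exact absurd ⟨x, h, hx⟩ hne
      have := hW1.eq_of_subset_isCircuit hW this
      exact (hW1s (this ▸ htW)).2 rfl
    by_cases hsub : W \ Z ⊆ W1
    · have hne : (Z1 ∩ W1).Nonempty := by
        by_contra hne
        have : Z1 ⊆ Z := fun x hx => by
          rcases (hZ1s hx).1 with h | h
          · exact h
          · by_contra hxZ
            exact hne ⟨x, hx, hsub ⟨h, hxZ⟩⟩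
        have := hZ1.eq_of_subset_isCircuit hZ this
        exact (hZ1s (this ▸ htZ)).2 rfl
      refine ih Z1 W1 (small _ t ?_ (Or.inl htZ) ?_) hZ1 hW1 ⟨c, hcZ1, hcC⟩ hne hwW1
      · exact union_subset (hZ1s.trans sdiff_subset) ((hW1s.trans sdiff_subset).trans
          (union_comm _ _).subset)
      · rintro (h | h)
        · exact (hZ1s h).2 rfl
        · exact (hW1s h).2 rfl
    · obtain ⟨a, ⟨haW, haZ⟩, haW1⟩ := not_subset.1 hsub
      refine ih Z W1 (small _ a ?_ (Or.inr haW) ?_) hZ hW1 ⟨c, hcZ, hcC⟩ hW1Z hwW1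
      · exact union_subset subset_union_left ((hW1s.trans sdiff_subset).trans
          (union_comm _ _).subset)
      · rintro (h | h)
        · exact haZ h
        · exact haW1 h

/-- key step: swap `Z` on `C` -/
lemma swap {C D X Z : Set α} (hC : M.IsCircuit C) (hZ : M.IsCircuit Z)
    (hcirc : ∀ W ⊆ C ∪ D ∪ X, M.IsCircuit W → W = C ∨ W = D ∨ X ⊆ W)
    (hCD : Disjoint C D) (hXC : Disjoint X C) (hXD : Disjoint X D) (hX : X.Nonempty)
    (hZs : Z ⊆ C ∪ D ∪ X) (hZC : (Z ∩ C).Nonempty) (hnC : ¬ C ⊆ Z) (hnD : ¬ D ⊆ Z)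
    (hXZ : X ⊆ Z) :
    ∃ Z1 ⊆ C ∪ D ∪ X, M.IsCircuit Z1 ∧ C \ Z ⊆ Z1 ∧ Z1 ∩ D = Z ∩ D ∧ X ⊆ Z1 := by
  obtain ⟨x, hxZ, hxC⟩ := hZC
  obtain ⟨y, hyC, hyZ⟩ := not_subset.1 hnC
  obtain ⟨p, hpX⟩ := hX
  obtain ⟨Z1, hs, hZ1, hy1⟩ := hC.strong_elimination hZ hxC hxZ hyC hyZ
  have hs' : Z1 ⊆ C ∪ D ∪ X := fun a ha => by
    rcases (hs ha).1 with h | h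
    · exact Or.inl (Or.inl h)
    · exact hZs h
  have hx1 : x ∉ Z1 := fun h => (hs h).2 rfl
  have hX1 : X ⊆ Z1 := by
    rcases hcirc Z1 hs' hZ1 with h | h | h
    · exact absurd (h ▸ hxC) hx1
    · exact absurd (⟨hyC, h ▸ hy1⟩ : y ∈ C ∩ D) (fun h => hCD.le_bot h)
    · exact h
  have hD1 : Z1 ∩ D ⊆ Z := fun a ha => by
    rcases (hs ha.1).1 with h | h
    · exact absurd (⟨h, ha.2⟩ : a ∈ C ∩ D) (fun h => hCD.le_bot h)
    · exact h
  have hne : Z1 ≠ Z := fun h => hx1 (h ▸ hxZ)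
  -- any circuit avoiding `p` in `Z ∪ Z1` equals `C`
  have key : ∀ W ⊆ (Z ∪ Z1) \ {p}, M.IsCircuit W → W = C := by
    intro W hW hWc
    have hWs : W ⊆ C ∪ D ∪ X := fun a ha => (hW ha).1.elim (fun h => hZs h) (fun h => hs' h)
    rcases hcirc W hWs hWc with h | h | h
    · exact h
    · exfalso
      apply hnD
      intro d hd
      rcases (hW (h.symm ▸ hd)).1 with h' | h'
      · exact h'
      · exact hD1 ⟨h', hd⟩
    · exact absurd rfl (hW (h hpX)).2
  refine ⟨Z1, hs', hZ1, ?_, ?_, hX1⟩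
  · intro y' hy'
    by_contra hy1'
    obtain ⟨W, hW, hWc⟩ := hZ.elimination hZ1 hne.symm p
    have := key W hW hWc
    rcases (hW (this.symm ▸ hy'.1)).1 with h | h
    · exact hy'.2 h
    · exact hy1' h
  · refine subset_antisymm (fun a ha => ⟨hD1 ha, ha.2⟩) (fun d hd => ⟨?_, hd.2⟩)
    by_contra hd1
    obtain ⟨W, hW, hWc, hdW⟩ := hZ.strong_elimination hZ1 (hXZ hpX) (hX1 hpX) hd.1 hd1
    have := key W hW hWc
    exact hCD.le_bot ⟨this ▸ hdW, hd.2⟩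

/-- Two disjoint skew circuits lead to a bigger one. -/
lemma bigger {C D X Z : Set α} (hC : M.IsCircuit C) (hD : M.IsCircuit D) (hZ : M.IsCircuit Z)
    (hcirc : ∀ W ⊆ C ∪ D ∪ X, M.IsCircuit W → W = C ∨ W = D ∨ X ⊆ W)
    (hCD : Disjoint C D) (hXC : Disjoint X C) (hXD : Disjoint X D) (hX : X.Nonempty)
    (hZs : Z ⊆ C ∪ D ∪ X) (hZC : (Z ∩ C).Nonempty) (hZD : (Z ∩ D).Nonempty)
    (hXZ : X ⊆ Z) (c : ℕ) (hmax : ∀ W, M.IsCircuit W → W.ncard ≤ c) :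
    C.ncard + D.ncard < 2 * c := by
  obtain ⟨p, hp⟩ := hX
  have notsub : ∀ W, M.IsCircuit W → X ⊆ W → ¬ C ⊆ W ∧ ¬ D ⊆ W := by
    intro W hW hXW
    refine ⟨fun h => ?_, fun h => ?_⟩
    · have := hC.eq_of_subset_isCircuit hW h
      exact hXC.le_bot ⟨hp, this ▸ hXW hp⟩
    · have := hD.eq_of_subset_isCircuit hW h
      exact hXD.le_bot ⟨hp, this ▸ hXW hp⟩
  obtain ⟨Z1, hs1, hZ1, hc1, hd1, hX1⟩ := swap hC hZ hcirc hCD hXC hXD ⟨p, hp⟩ hZs hZC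
    (notsub Z hZ hXZ).1 (notsub Z hZ hXZ).2 hXZ
  have hswap : D ∪ C ∪ X = C ∪ D ∪ X := by rw [union_comm D C]
  obtain ⟨Z2, hs2, hZ2, hc2, hd2, hX2⟩ := swap (D := C) (X := X) hD hZ1 
    (fun W hW hWc => by
      rcases hcirc W (hswap ▸ hW) hWc with h | h | h
      · exact Or.inr (Or.inl h)
      · exact Or.inl h
      · exact Or.inr (Or.inr h))
    hCD.symm hXD hXC ⟨p, hp⟩ (hswap ▸ hs1) (hd1 ▸ hZD)
    (notsub Z1 hZ1 hX1).2 (notsub Z1 hZ1 hX1).1 hX1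
  have hZf := fin_of_sub hZ.subset_ground
  have hZ2f := fin_of_sub hZ2.subset_ground
  have hCf := fin_of_sub hC.subset_ground
  have hDf := fin_of_sub hD.subset_ground
  have hU : insert p (C ∪ D) ⊆ Z ∪ Z2 := by
    rintro a (rfl | ha | ha)
    · exact Or.inl (hXZ hp)
    · by_cases h : a ∈ Z
      · exact Or.inl h
      · have : a ∈ Z1 ∩ C := ⟨hc1 ⟨ha, h⟩, ha⟩
        rw [← hd2] at this
        exact Or.inr this.1
    · by_cases h : a ∈ Z
      · exact Or.inl h
      · refine Or.inr (hc2 ⟨ha, fun h1 => h ?_⟩)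
        have : a ∈ Z1 ∩ D := ⟨h1, ha⟩
        rw [hd1] at this
        exact this.1
  have h1 := ncard_le_ncard hU (hZf.union hZ2f)
  rw [ncard_insert_of_notMem _ (hCf.union hDf), ncard_union_eq hCD hCf hDf] at h1
  · have h2 := ncard_union_le Z Z2
    have := hmax Z hZ
    have := hmax Z2 hZ2
    omega
  · rintro (h | h)
    · exact hXC.le_bot ⟨hp, h⟩
    · exact hXD.le_bot ⟨hp, h⟩

/-- local connectivity condition -/
def NS {α : Type} (M : Matroid α) (C D X : Set α) : Prop :=
  rho M X + rho M (C ∪ D ∪ X) < rho M (C ∪ X) + rho M (D ∪ X)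

lemma NS_of_circuit {C D Z : Set α} (hZ : M.IsCircuit Z) (hCD : Disjoint C D)
    (hZC : (Z ∩ C).Nonempty) (hZD : (Z ∩ D).Nonempty) : NS M C D (Z \ (C ∪ D)) := by
  by_contra hns
  unfold NS at hns
  set X := Z \ (C ∪ D) with hXdef
  set A := Z ∩ C
  set B := Z ∩ D
  have hAX : A ∪ X ⊆ Z := union_subset inter_subset_left sdiff_subset
  have hBX : B ∪ X ⊆ Z := union_subset inter_subset_left sdiff_subset
  have hZe : A ∪ X ∪ B = Z := by
    ext a; simp only [A, B, X, mem_union, mem_inter_iff, mem_sdiff]; tauto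
  have hZe' : A ∪ X ∪ B ⊆ (D ∪ X) ∪ (A ∪ X) := by
    intro a; simp only [A, B, X, mem_union, mem_inter_iff, mem_sdiff]; tauto
  obtain ⟨d, hd⟩ := hZD
  obtain ⟨c, hc⟩ := hZC
  have iA : M.Indep (A ∪ X) := hZ.ssubset_indep (ssubset_of_subset_not_subset hAX (fun h => by
    rcases h hd.1 with h | h
    · exact hCD.le_bot ⟨h.2, hd.2⟩
    · exact h.2 (Or.inr hd.2)))
  have iB : M.Indep (B ∪ X) := hZ.ssubset_indep (ssubset_of_subset_not_subset hBX (fun h => by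
    rcases h hc.1 with h | h
    · exact hCD.le_bot ⟨hc.2, h.2⟩
    · exact h.2 (Or.inl hc.2)))
  have hfZ := fin_of_sub hZ.subset_ground
  have fA : A.Finite := hfZ.subset inter_subset_left
  have fB : B.Finite := hfZ.subset inter_subset_left
  have fX : X.Finite := hfZ.subset sdiff_subset
  have dAX : Disjoint A X := Set.disjoint_left.2 fun a h h' => h'.2 (Or.inl h.2)
  have dBX : Disjoint B X := Set.disjoint_left.2 fun a h h' => h'.2 (Or.inr h.2)
  have dAB : Disjoint (A ∪ X) B := by
    rw [disjoint_union_left]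
    exact ⟨hCD.mono inter_subset_right inter_subset_right, dBX.symm⟩
  have c1 := rho_indep iA
  have c2 := rho_indep iB
  have c3 := rho_indep (iA.subset subset_union_right)
  rw [ncard_union_eq dAX fA fX] at c1
  rw [ncard_union_eq dBX fB fX] at c2
  have c4 := rho_dep hZ.dep
  have c5 : Z.ncard = A.ncard + X.ncard + B.ncard := by
    rw [← hZe, ncard_union_eq dAB (fA.union fX) fB, ncard_union_eq dAX fA fX]
  have s1 := rho_submod' (M := M) (X := C ∪ X) (Y := A ∪ X ∪ D) (A := A ∪ X) (B := C ∪ D ∪ X)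
    (union_subset_union_left _ inter_subset_right) subset_union_left
    (by intro a; simp only [mem_union]; tauto)
  have s2 := rho_submod' (M := M) (X := D ∪ X) (Y := Z) (A := B ∪ X) (B := A ∪ X ∪ D)
    (union_subset_union_left _ inter_subset_right) hBX
    (by rw [← hZe]; intro a; simp only [mem_union]; tauto)
  omega

lemma case2 {C D Z0 : Set α} (hC : M.IsCircuit C) (hD : M.IsCircuit D)
    (hCD : Disjoint C D) (hskew : ∀ W ⊆ C ∪ D, M.IsCircuit W → W = C ∨ W = D)
    (hZ0 : M.IsCircuit Z0) (hZC0 : (Z0 ∩ C).Nonempty) (hZD0 : (Z0 ∩ D).Nonempty)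
    (c : ℕ) (hmax : ∀ W, M.IsCircuit W → W.ncard ≤ c) :
    C.ncard + D.ncard < 2 * c := by
  have hfin : {X | X ⊆ M.E \ (C ∪ D) ∧ NS M C D X}.Finite :=
    (M.ground_finite.finite_subsets).subset fun X hX => hX.1.trans sdiff_subset
  obtain ⟨X, hXmin⟩ := hfin.exists_minimal ⟨Z0 \ (C ∪ D),
    sdiff_subset_sdiff_left hZ0.subset_ground, NS_of_circuit hZ0 hCD hZC0 hZD0⟩
  obtain ⟨hXE, hNS⟩ := hXmin.prop
  have hmin : ∀ Y ⊆ X, NS M C D Y → X ⊆ Y := fun Y hY hN => hXmin.le_of_le ⟨hY.trans hXE, hN⟩ hY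
  have hXC : Disjoint X C := Set.disjoint_left.2 fun a h h' => (hXE h).2 (Or.inl h')
  have hXD : Disjoint X D := Set.disjoint_left.2 fun a h h' => (hXE h).2 (Or.inr h')
  -- circuits meeting both `C` and `D`
  have hboth : ∀ W ⊆ C ∪ D ∪ X, M.IsCircuit W → (W ∩ C).Nonempty → (W ∩ D).Nonempty → X ⊆ W := by
    intro W hW hWc h1 h2
    refine (hmin (W \ (C ∪ D)) ?_ (NS_of_circuit hWc hCD h1 h2)).trans sdiff_subset
    rintro a ⟨ha, ha'⟩
    exact (hW ha).resolve_left ha'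
  -- `X` avoids circuits with only one side
  have hone : ∀ A, (∀ x ∈ X, rho M (A ∪ (X \ {x})) < rho M (A ∪ X)) → A ⊆ M.E → 
      ∀ W ⊆ A ∪ X, M.IsCircuit W → W ⊆ A := by
    intro A hA hAE W hW hWc a ha
    by_contra haA
    have haX := (hW ha).resolve_left haA
    have h1 := hA a haX
    have h2 := hWc.mem_closure_sdiff_singleton_of_mem ha
    have h3 : a ∈ M.closure (A ∪ (X \ {a})) := M.closure_subset_closure (fun b hb => by
      rcases hW hb.1 with h | h
      · exact Or.inl h
      · exact Or.inr ⟨h, hb.2⟩) h2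
    have h4 : A ∪ X ⊆ M.closure (A ∪ (X \ {a})) := by
      have h5 : A ∪ (X \ {a}) ⊆ M.closure (A ∪ (X \ {a})) := M.subset_closure _
        (union_subset hAE ((sdiff_subset.trans hXE).trans sdiff_subset))
      intro b hb
      by_cases hba : b = a
      · rw [hba]; exact h3
      · exact h5 (hb.imp id fun h => ⟨h, hba⟩)
    have h6 : rho M (A ∪ X) ≤ rho M (A ∪ (X \ {a})) := by
      have := rho_mono (M := M) h4
      rwa [rho, rho, M.eRk_closure_eq] at this
    omega
  have hnot : ∀ x ∈ X, ¬ NS M C D (X \ {x}) := fun x hx h => (hmin _ sdiff_subset h hx).2 rfl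
  have hsideC : ∀ x ∈ X, rho M (C ∪ (X \ {x})) < rho M (C ∪ X) := by
    intro x hx
    have h1 := hnot x hx
    unfold NS at h1 hNS
    have m : X \ {x} ⊆ X := sdiff_subset
    have hxx : X ⊆ insert x (X \ {x}) := by simp
    have s1 := rho_submod' (M := M) (X := C ∪ X) (Y := C ∪ D ∪ (X \ {x}))
      (A := C ∪ (X \ {x})) (B := C ∪ D ∪ X)
      (union_subset_union_right _ m) (union_subset_union_left _ subset_union_left)
      (by intro a; simp only [mem_union]; tauto)
    have s2 := rho_submod' (M := M) (X := X) (Y := D ∪ (X \ {x}))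
      (A := X \ {x}) (B := D ∪ X) m subset_union_right
      (by intro a; simp only [mem_union]; tauto)
    have s3 : rho M (C ∪ D ∪ (X \ {x})) ≤ rho M (C ∪ D ∪ X) := rho_mono (union_subset_union_right _ m)
    by_contra hh
    omega
  have hsideD : ∀ x ∈ X, rho M (D ∪ (X \ {x})) < rho M (D ∪ X) := by
    intro x hx
    have h1 := hnot x hx
    unfold NS at h1 hNS
    have m : X \ {x} ⊆ X := sdiff_subset
    have s1 := rho_submod' (M := M) (X := D ∪ X) (Y := C ∪ D ∪ (X \ {x}))
      (A := D ∪ (X \ {x})) (B := C ∪ D ∪ X)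
      (union_subset_union_right _ m) (union_subset_union_left _ subset_union_right)
      (by intro a; simp only [mem_union]; tauto)
    have s2 := rho_submod' (M := M) (X := X) (Y := C ∪ (X \ {x}))
      (A := X \ {x}) (B := C ∪ X) m subset_union_right
      (by intro a; simp only [mem_union]; tauto)
    have s3 : rho M (C ∪ D ∪ (X \ {x})) ≤ rho M (C ∪ D ∪ X) := rho_mono (union_subset_union_right _ m)
    by_contra hh
    omega
  have hWC : ∀ W ⊆ C ∪ X, M.IsCircuit W → W = C := fun W hW hWc =>
    hWc.eq_of_subset_isCircuit hC (hone C hsideC hC.subset_ground W hW hWc)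
  have hWD : ∀ W ⊆ D ∪ X, M.IsCircuit W → W = D := fun W hW hWc =>
    hWc.eq_of_subset_isCircuit hD (hone D hsideD hD.subset_ground W hW hWc)
  have hcirc : ∀ W ⊆ C ∪ D ∪ X, M.IsCircuit W → W = C ∨ W = D ∨ X ⊆ W := by
    intro W hW hWc
    by_cases h1 : (W ∩ C).Nonempty
    · by_cases h2 : (W ∩ D).Nonempty
      · exact Or.inr (Or.inr (hboth W hW hWc h1 h2))
      · refine Or.inl (hWC W (fun a ha => ?_) hWc)
        rcases hW ha with (h | h) | h
        · exact Or.inl h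
        · exact absurd ⟨a, ha, h⟩ h2
        · exact Or.inr h
    · refine Or.inr (Or.inl (hWD W (fun a ha => ?_) hWc))
      rcases hW ha with (h | h) | h
      · exact absurd ⟨a, ha, h⟩ h1
      · exact Or.inl h
      · exact Or.inr h
  -- existence of a circuit meeting both
  obtain ⟨e, he⟩ := hC.nonempty
  obtain ⟨d, hd⟩ := hD.nonempty
  have hfC := fin_of_sub hC.subset_ground
  have hfD := fin_of_sub hD.subset_ground
  have hfX : X.Finite := fin_of_sub (hXE.trans sdiff_subset)
  have hsubE : C \ {e} ∪ D \ {d} ∪ X ⊆ M.E := union_subset (union_subset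
    (sdiff_subset.trans hC.subset_ground) (sdiff_subset.trans hD.subset_ground))
    (hXE.trans sdiff_subset)
  have hdep : M.Dep (C \ {e} ∪ D \ {d} ∪ X) := by
    rw [← Matroid.not_indep_iff hsubE]
    intro hi
    have h1 := rho_indep hi
    have h2 := rho_indep (hi.subset subset_union_right)
    have d1 : Disjoint (C \ {e}) (D \ {d}) := hCD.mono sdiff_subset sdiff_subset
    have d2 : Disjoint (C \ {e} ∪ D \ {d}) X := by
      rw [disjoint_union_left]
      exact ⟨hXC.symm.mono_left sdiff_subset, hXD.symm.mono_left sdiff_subset⟩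
    rw [ncard_union_eq d2 (hfC.sdiff.union hfD.sdiff) hfX, ncard_union_eq d1 hfC.sdiff hfD.sdiff,
      ncard_sdiff_singleton_of_mem he, ncard_sdiff_singleton_of_mem hd] at h1
    have h3 : rho M (C \ {e} ∪ D \ {d} ∪ X) ≤ rho M (C ∪ D ∪ X) :=
      rho_mono (union_subset_union_left _ (union_subset_union sdiff_subset sdiff_subset))
    have h4 := rho_submod' (M := M) (X := C) (Y := X) (A := ∅) (B := C ∪ X)
      (empty_subset _) (empty_subset _) subset_rfl
    have h5 := rho_submod' (M := M) (X := D) (Y := X) (A := ∅) (B := D ∪ X)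
      (empty_subset _) (empty_subset _) subset_rfl
    have h6 := rho_circuit hC
    have h7 := rho_circuit hD
    unfold NS at hNS
    omega
  obtain ⟨Z, hZs, hZ⟩ := hdep.exists_isCircuit_subset
  have heZ : e ∉ Z := fun h => by
    rcases hZs h with (h | h) | h
    · exact h.2 rfl
    · exact hCD.le_bot ⟨he, h.1⟩
    · exact hXC.le_bot ⟨h, he⟩
  have hdZ : d ∉ Z := fun h => by
    rcases hZs h with (h | h) | h
    · exact hCD.le_bot ⟨h.1, hd⟩
    · exact h.2 rfl
    · exact hXD.le_bot ⟨h, hd⟩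
  have hZs' : Z ⊆ C ∪ D ∪ X :=
    hZs.trans (union_subset_union_left _ (union_subset_union sdiff_subset sdiff_subset))
  have hZD : (Z ∩ D).Nonempty := by
    by_contra h2
    have := hWC Z (fun a ha => by
      rcases hZs' ha with (h | h) | h
      · exact Or.inl h
      · exact absurd ⟨a, ha, h⟩ h2
      · exact Or.inr h) hZ
    exact heZ (this ▸ he)
  have hZC : (Z ∩ C).Nonempty := by
    by_contra h2
    have := hWD Z (fun a ha => by
      rcases hZs' ha with (h | h) | h
      · exact absurd ⟨a, ha, h⟩ h2
      · exact Or.inl h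
      · exact Or.inr h) hZ
    exact hdZ (this ▸ hd)
  have hXne : X.Nonempty := by
    by_contra hX0
    rw [not_nonempty_iff_eq_empty] at hX0
    subst hX0
    rcases hskew Z (by simpa using hZs') hZ with h | h
    · exact heZ (h ▸ he)
    · exact hdZ (h ▸ hd)
  exact bigger hC hD hZ hcirc hCD hXC hXD hXne hZs' hZC hZD (hboth Z hZs' hZ hZC hZD) c hmax

/-- No nontrivial circuit-separator. -/
def Conn {α : Type} (M : Matroid α) : Prop :=
  ∀ S ⊆ M.E, S.Nonempty → (∀ Z, M.IsCircuit Z → (Z ∩ S).Nonempty → Z ⊆ S) → S = M.E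

lemma contract_small (hconn : Conn M) {C D : Set α} (hC : M.IsCircuit C)
    (hmax : ∀ W, M.IsCircuit W → W.ncard ≤ C.ncard) (hD : (M ／ C).IsCircuit D) :
    D.ncard < C.ncard := by
  obtain ⟨Z, hZ, hDZ, hZs⟩ := hD.exists_subset_isCircuit_of_contract
  have hdis : Disjoint C D := (disjoint_sdiff_left.mono_left hD.subset_ground).symm
  by_cases h : Z = D
  · rw [h] at hZ
    by_contra hlt
    have hskew : ∀ W ⊆ C ∪ D, M.IsCircuit W → W = C ∨ W = D := by
      intro W hW hWc
      by_cases hWC : W ⊆ C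
      · exact Or.inl (hWc.eq_of_subset_isCircuit hC hWC)
      · right
        have h1 := hWc.contract_dep_of_not_subset hWC
        have h2 := hD.eq_of_dep_subset h1 (fun a ha => (hW ha.1).resolve_left ha.2)
        exact (hZ.eq_of_subset_isCircuit hWc (h2 ▸ sdiff_subset)).symm
    obtain ⟨d, hd⟩ := hZ.nonempty
    have hS := hconn {y | ∃ Y, M.IsCircuit Y ∧ (Y ∩ C).Nonempty ∧ y ∈ Y}
      (fun y ⟨Y, hY, _, hy⟩ => hY.subset_ground hy)
      (by
        obtain ⟨e, he⟩ := hC.nonempty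
        exact ⟨e, C, hC, ⟨e, he, he⟩, he⟩)
      (by
        rintro W hW ⟨a, haW, Y, hY, hYC, haY⟩ w hw
        exact conn_trans _ Y W le_rfl hY hW hYC ⟨a, haY, haW⟩ hw)
    have hdS : d ∈ M.E := hZ.subset_ground hd
    rw [← hS] at hdS
    obtain ⟨Y, hY, hYC, hdY⟩ := hdS
    have := case2 hC hZ hdis hskew hY hYC ⟨d, hdY, hd⟩ _ hmax
    omega
  · have : D ⊂ Z := hDZ.ssubset_of_ne (Ne.symm h)
    exact (ncard_lt_ncard this (fin_of_sub hZ.subset_ground)).trans_le (hmax Z hZ)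

end circ

lemma DD.extend {α : Type} {r : Set α → ℕ} {E E' : Set α} {d : ℕ} (h : DD r E' d)
    (hE : E' ⊆ E) (hr : ∀ X, r X = r (X ∩ E')) : DD r E d := by
  obtain ⟨V, root, parent, f, h1, h2, h3, h4, h5⟩ := h
  refine ⟨V, root, parent, f, h1, h2, h3, ?_, fun X _ => ?_⟩
  · rw [hr, inter_eq_self_of_subset_right hE, h4]
  · rw [hr]
    refine (h5 _ inter_subset_right).trans (ncard_le_ncard ?_ (toFinite _))
    rintro v ⟨hv, e, he, ha⟩
    exact ⟨hv, e, he.1, ha⟩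

lemma reduce {α : Type} (c d : ℕ)
    (hyp : ∀ M : Matroid α, M.Finite → Conn M → (∀ C, M.IsCircuit C → C.ncard ≤ c) →
      DD (rho M) M.E d) :
    ∀ (n : ℕ) (M : Matroid α), M.Finite → M.E.ncard ≤ n →
    (∀ C, M.IsCircuit C → C.ncard ≤ c) → DD (rho M) M.E d := by
  intro n
  induction n with
  | zero =>
    intro M hM hn hc
    refine hyp M hM ?_ hc
    intro S hS hne _
    have : M.E = ∅ := (ncard_eq_zero M.ground_finite).1 (by omega)
    rw [this] at hS
    exact absurd (subset_empty_iff.1 hS) hne.ne_empty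
  | succ n ih =>
    intro M hM hn hc
    by_cases hconn : Conn M
    · exact hyp M hM hconn hc
    unfold Conn at hconn
    push Not at hconn
    obtain ⟨S, hS, hne, hsep, hSE⟩ := hconn
    have hadd := rho_sep hS hsep
    have key : ∀ T ⊆ M.E, T ≠ M.E → DD (rho (M ↾ T)) T d := by
      intro T hT hTE
      have hlt := ncard_lt_ncard (hT.ssubset_of_ne hTE) M.ground_finite
      have hTf : (M ↾ T).Finite := ⟨M.ground_finite.subset hT⟩
      refine ih (M ↾ T) hTf ?_ ?_
      · change T.ncard ≤ n
        omega
      · intro C hC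
        exact hc C ((Matroid.restrict_isCircuit_iff hT).1 hC).1
    have hrest : ∀ T X, X ⊆ T → rho (M ↾ T) X = rho M X := by
      intro T X h
      rw [rho, rho, M.restrict_eRk_eq h]
    refine DD.sum (key S hS hSE) (key (M.E \ S) sdiff_subset ?_) disjoint_sdiff_right ?_ ?_
    · intro h
      obtain ⟨a, ha⟩ := hne
      exact (h.symm ▸ hS ha : a ∈ M.E \ S).2 ha
    · rw [hrest _ _ subset_rfl, hrest _ _ subset_rfl, hadd]
    · intro X hX
      rw [hrest _ _ inter_subset_right, hrest _ _ inter_subset_right]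
      have := rho_submod' (M := M) (X := X ∩ S) (Y := X ∩ (M.E \ S)) (A := ∅) (B := X)
        (empty_subset _) (empty_subset _) (fun a ha => by
          by_cases h : a ∈ S
          · exact Or.inl ⟨ha, h⟩
          · exact Or.inr ⟨ha, hX ha, h⟩)
      omega

lemma trivial_DD {α : Type} {M : Matroid α} [M.Finite] : DD (rho M) M.E (rho M M.E) := by
  have := (DD.zero M.E).add (r' := rho M) (rho M M.E) rho_empty (by simp)
    (fun X hX => by simpa using rho_mono hX)
  simpa using this

lemma exists_circ {α : Type} {M : Matroid α} [M.Finite] (hconn : Conn M) (h : 1 < M.E.ncard) :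
    ∃ Z, M.IsCircuit Z ∧ 1 < Z.ncard := by
  obtain ⟨e, he, f, hf, hef⟩ := (one_lt_ncard M.ground_finite).1 h
  by_contra hno
  push Not at hno
  have h1 := hconn {e} (by simpa using he) ⟨e, rfl⟩ (by
    rintro Z hZ ⟨a, haZ, rfl⟩ b hb
    have := (ncard_le_one (fin_of_sub hZ.subset_ground)).1 (hno Z hZ) b hb _ haZ
    exact this)
  rw [← h1] at hf
  exact hef hf.symm

lemma main_aux {α : Type} (c : ℕ) : ∀ (M : Matroid α), M.Finite →
    (∀ C, M.IsCircuit C → C.ncard ≤ c + 1) → DD (rho M) M.E ((c + 1) ^ 2) := by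
  induction c with
  | zero =>
    intro M hM hc
    refine reduce (0 + 1) _ ?_ _ M hM le_rfl hc
    intro M hM hconn hc
    by_cases h : 1 < M.E.ncard
    · obtain ⟨Z, hZ, hZ1⟩ := exists_circ hconn h
      have := hc Z hZ
      omega
    · have := rho_le_ncard (M := M) subset_rfl
      exact trivial_DD.mono (by simp; omega)
  | succ c ihc =>
    intro M hM hc
    refine reduce (c + 1 + 1) _ ?_ _ M hM le_rfl hc
    intro M hM hconn hc
    by_cases h : 1 < M.E.ncard
    · obtain ⟨Z, hZ, hZ1⟩ := exists_circ hconn h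
      have hfin : {C | M.IsCircuit C}.Finite :=
        M.ground_finite.finite_subsets.subset fun C hC => hC.subset_ground
      obtain ⟨C, hC, hmax⟩ := exists_max_image _ (fun C : Set α => C.ncard) hfin ⟨Z, hZ⟩
      have hC : M.IsCircuit C := hC
      have hCf := contract_finite (M := M) C
      have h1 := ihc (M ／ C) hCf (fun D hD => by
        have := contract_small hconn hC hmax hD
        have := hc C hC
        omega)
      have h2 : DD (rho (M ／ C)) M.E ((c + 1) ^ 2) := by
        refine h1.extend sdiff_subset fun X => ?_
        rw [rho, rho, Matroid.eRk_inter_ground]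
      have h3 : DD (rho M) M.E ((c + 1) ^ 2 + rho M C) := by
        refine h2.add _ rho_empty ?_ ?_
        · rw [← rho_contract hC.subset_ground subset_rfl,
            union_eq_self_of_subset_right hC.subset_ground]
        · intro X hX
          rw [← rho_contract hC.subset_ground hX]
          exact rho_mono subset_union_left
      refine h3.mono ?_
      have := rho_circuit hC
      have := hc C hC
      nlinarith
    · have := rho_le_ncard (M := M) subset_rfl
      have h2 : 1 ≤ (c + 1 + 1) ^ 2 := Nat.one_le_pow _ _ (by omega)
      exact trivial_DD.mono (by omega)

end BD

/-- If a finite matroid `M` has at least one circuit and every circuit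
of `M` has size at most `ℓ`, then `M` has a depth-decomposition of depth at most `ℓ²`;
that is, the branch-depth of `M` is at most `ℓ²`. -/
theorem branchDepth_le_sq_of_circuits_small {α : Type} (M : Matroid α) [M.Finite]
    (ℓ : ℕ) (hex : ∃ C : Set α, IsCircuitOf M C)
    (hall : ∀ C : Set α, IsCircuitOf M C → C.ncard ≤ ℓ) :
    HasDepthDecompOfDepthLE M (ℓ ^ 2) ∧ branchDepth M ≤ ℓ ^ 2 := by
  classical
  have key : HasDepthDecompOfDepthLE M (ℓ ^ 2) := by
    obtain ⟨C, hC⟩ := hex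
    have hcirc : ∀ C, M.IsCircuit C → IsCircuitOf M C := fun C hC => by
      rw [Matroid.isCircuit_iff] at hC
      exact ⟨hC.1, fun D hD hDC => hC.2 hD hDC⟩
    have hpos : 0 < C.ncard := by
      rw [Set.ncard_pos (BD.fin_of_sub hC.1.subset_ground)]
      exact hC.1.nonempty
    have := hall C hC
    obtain ⟨c, rfl⟩ : ∃ c, ℓ = c + 1 := ⟨ℓ - 1, by omega⟩
    have h := BD.main_aux c M inferInstance (fun C hC => hall C (hcirc C hC))
    apply BD.DD.to_le
    have he : mrank M = BD.rho M := funext fun X => BD.mrank_eq X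
    rw [he]
    exact h
  exact ⟨key, Nat.sInf_le key⟩
end
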